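/- arXiv:1805.11448 — 4 statements merged into one kernel-verified Lean document; each statement's English description precedes it below -/
import Mathlib

section
/- Let A be a skew PBW extension of a ring R with generators x_1,…,x_n. Then for each 1 ≤ i ≤ n there exist an injective ring endomorphism σ_i : R → R and a σ_i-derivation δ_i : R → R such that x_i r = σ_i(r) x_i + δ_i(r) for every r ∈ R. -/
open Finsupp

noncomputable section

variable {R A : Type*}

/-- The ordered monomial `x₁^{α₁} ⋯ xₙ^{αₙ}` in a (possibly noncommutative) ring. -/
def spbwMon [Ring A] {n : ℕ} (x : Fin n → A) (α : Fin n →₀ ℕ) : A :=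
  (List.ofFn fun i => x i ^ α i).prod

/-- `A` is a skew Poincaré–Birkhoff–Witt extension of `R` (embedded in `A` via `ι`)
with generators `x 0, …, x (n-1)`:
(i) `R ⊆ A` (via the embedding `ι`);
(ii) `A` is a free left `R`-module with basis the monomials `x^α`, i.e. every element of `A`
has a unique representation as a finite `R`-linear combination of the monomials;
(iii) for each `i` and each nonzero `r ∈ R` there is a nonzero `c ∈ R` with
`x i * r - c * x i ∈ R`;
(iv) for all `i, j` there is a nonzero `c ∈ R` with
`x j * x i - c * (x i * x j) ∈ R + R x 0 + ⋯ + R x (n-1)`. -/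
structure IsSkewPBWExtension [Ring R] [Ring A] (ι : R →+* A) {n : ℕ} (x : Fin n → A) :
    Prop where
  not_mem : ∀ i, x i ∉ Set.range ι
  repr_uniq : ∀ a : A, ∃! c : (Fin n →₀ ℕ) →₀ R, a = c.sum fun α r => ι r * spbwMon x α
  var_coeff : ∀ i, ∀ r : R, r ≠ 0 →
    ∃ cr : R, cr ≠ 0 ∧ x i * ι r - ι cr * x i ∈ Set.range ι
  var_var : ∀ i j, ∃ cij : R, cij ≠ 0 ∧ ∃ r₀ : R, ∃ rv : Fin n → R,
    x j * x i - ι cij * (x i * x j) = ι r₀ + ∑ k, ι (rv k) * x k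

/-! Since the monomials `1` and `x i` belong to a left `R`-basis, the coefficients in
`x i * r = σ r * x i + δ r` are unique. Expanding `x i * (r + s)` and `x i * (r * s)` and comparing
coefficients therefore gives all the identities for `σ` and `δ`; injectivity of `σ` is the
requirement that the leading coefficient be nonzero when `r ≠ 0`. -/

section AffineForm

variable [Semiring R] [Semiring A]

/-- The left affine forms in `t`: the additive map `(a, b) ↦ a t + b`, with `R` acting on `A`
through `ι`. Its injectivity says that `1, t` are left linearly independent over `R`. -/
def affineForm (ι : R →+* A) (t : A) : R × R →+ A :=
  ((AddMonoidHom.mulRight t).comp (ι : R →+ A)).coprod (ι : R →+ A)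

theorem affineForm_apply (ι : R →+* A) (t : A) (p : R × R) :
    affineForm ι t p = ι p.1 * t + ι p.2 :=
  rfl

theorem mul_map_mul_eq_affineForm {ι : R →+* A} {t : A} {σ δ : R → R}
    (hcomm : ∀ r, t * ι r = affineForm ι t (σ r, δ r)) (r s : R) :
    t * ι (r * s) = affineForm ι t (σ r * σ s, σ r * δ s + δ r * s) :=
  calc
    t * ι (r * s) = (ι (σ r) * t + ι (δ r)) * ι s := by
      rw [map_mul, ← mul_assoc, hcomm, affineForm_apply]
    _ = ι (σ r) * (ι (σ s) * t + ι (δ s)) + ι (δ r) * ι s := by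
      rw [add_mul, mul_assoc, hcomm, affineForm_apply]
    _ = affineForm ι t (σ r * σ s, σ r * δ s + δ r * s) := by
      simp only [affineForm_apply, map_add, map_mul, mul_add, mul_assoc, add_assoc]

theorem exists_ringHom_skewDerivation {ι : R →+* A} {t : A}
    (hinj : Function.Injective (affineForm ι t))
    (hrange : ∀ r, t * ι r ∈ Set.range (affineForm ι t)) :
    ∃ (σ : R →+* R) (δ : R →+ R), (∀ r s, δ (r * s) = σ r * δ s + δ r * s) ∧
      ∀ r, t * ι r = ι (σ r) * t + ι (δ r) := by
  choose φ hφ using hrange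
  have φ_zero : φ 0 = 0 := hinj <| by simp [hφ]
  have φ_one : φ 1 = (1, 0) := hinj <| by simp [hφ, affineForm_apply]
  have φ_add (r s : R) : φ (r + s) = φ r + φ s := hinj <| by simp [hφ, mul_add]
  have φ_mul (r s : R) :
      φ (r * s) = ((φ r).1 * (φ s).1, (φ r).1 * (φ s).2 + (φ r).2 * s) :=
    hinj <| (hφ _).trans <| mul_map_mul_eq_affineForm (fun r => (hφ r).symm) r s
  let σ : R →+* R :=
    { toFun r := (φ r).1
      map_zero' := congrArg Prod.fst φ_zero
      map_one' := congrArg Prod.fst φ_one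
      map_add' r s := congrArg Prod.fst (φ_add r s)
      map_mul' r s := congrArg Prod.fst (φ_mul r s) }
  let δ : R →+ R :=
    { toFun r := (φ r).2
      map_zero' := congrArg Prod.snd φ_zero
      map_add' r s := congrArg Prod.snd (φ_add r s) }
  exact ⟨σ, δ, fun r s => congrArg Prod.snd (φ_mul r s), fun r => (hφ r).symm⟩

end AffineForm

section Monomials

variable [Ring A] {n : ℕ} (x : Fin n → A)

theorem spbwMon_zero : spbwMon x 0 = 1 := by
  simp [spbwMon]

theorem spbwMon_single (i : Fin n) (k : ℕ) : spbwMon x (single i k) = x i ^ k := by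
  rw [spbwMon, List.ofFn_eq_map, List.prod_map_eq_pow_single i]
  · rw [List.count_eq_one_of_mem (List.nodup_finRange n) (List.mem_finRange i), pow_one,
      single_eq_same]
  · intro j hj _
    rw [single_eq_of_ne hj, pow_zero]

end Monomials

namespace IsSkewPBWExtension

variable [Ring R] [Ring A] {ι : R →+* A} {n : ℕ} {x : Fin n → A}

theorem sum_injective (h : IsSkewPBWExtension ι x) :
    Function.Injective fun c : (Fin n →₀ ℕ) →₀ R => c.sum fun α r => ι r * spbwMon x α :=
  fun _ _ hcd => (h.repr_uniq _).unique rfl hcd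

theorem affineForm_injective (h : IsSkewPBWExtension ι x) (i : Fin n) :
    Function.Injective (affineForm ι (x i)) := by
  let coeffs (p : R × R) : (Fin n →₀ ℕ) →₀ R := single (single i 1) p.1 + single 0 p.2
  have sum_coeffs (p : R × R) :
      (coeffs p).sum (fun α r => ι r * spbwMon x α) = affineForm ι (x i) p := by
    rw [sum_add_index' (by simp) (by simp [add_mul]), sum_single_index (by simp),
      sum_single_index (by simp), spbwMon_single, spbwMon_zero, pow_one, mul_one, affineForm_apply]
  have coeffs_injective : Function.Injective coeffs := by
    intro p q hpq
    have hfst := DFunLike.congr_fun hpq (single i 1)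
    have hsnd := DFunLike.congr_fun hpq 0
    exact Prod.ext (by simpa [coeffs] using hfst) (by simpa [coeffs] using hsnd)
  intro p q hpq
  exact coeffs_injective <| h.sum_injective <| by simpa only [sum_coeffs] using hpq

end IsSkewPBWExtension

theorem skewPBW_exists_sigma_delta_general [Ring R] [Ring A] {ι : R →+* A} {t : A}
    (hinj : Function.Injective (affineForm ι t))
    (hcoeff : ∀ r : R, r ≠ 0 → ∃ c : R, c ≠ 0 ∧ t * ι r - ι c * t ∈ Set.range ι) :
    ∃ σ : R →+* R, Function.Injective σ ∧
      ∃ δ : R → R, (∀ r s : R, δ (r + s) = δ r + δ s) ∧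
        (∀ r s : R, δ (r * s) = σ r * δ s + δ r * s) ∧
        ∀ r : R, t * ι r = ι (σ r) * t + ι (δ r) := by
  have exists_coeff {r : R} (hr : r ≠ 0) : ∃ c d : R, c ≠ 0 ∧ affineForm ι t (c, d) = t * ι r := by
    obtain ⟨c, hc, d, hd⟩ := hcoeff r hr
    exact ⟨c, d, hc, by rw [affineForm_apply, hd, add_sub_cancel]⟩
  have mem_range (r : R) : t * ι r ∈ Set.range (affineForm ι t) := by
    rcases eq_or_ne r 0 with rfl | hr
    · exact ⟨0, by simp⟩
    · obtain ⟨c, d, -, hcd⟩ := exists_coeff hr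
      exact ⟨(c, d), hcd⟩
  obtain ⟨σ, δ, hδ, hcomm⟩ := exists_ringHom_skewDerivation hinj mem_range
  refine ⟨σ, (injective_iff_map_eq_zero σ).2 fun r hσr => ?_, δ, map_add δ, hδ, hcomm⟩
  by_contra hr
  obtain ⟨c, d, hc, hcd⟩ := exists_coeff hr
  have hpair : (c, d) = (σ r, δ r) := hinj (hcd.trans (hcomm r))
  exact hc ((congrArg Prod.fst hpair).trans hσr)

/-- If `A` is a skew PBW extension of `R` with generators `x i`, then for
each `i` there exist an injective ring endomorphism `σ` of `R` and a `σ`-derivation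
`δ : R → R` such that `x i * r = σ(r) * x i + δ(r)` for every `r ∈ R`. -/
theorem skewPBW_exists_sigma_delta [Ring R] [Ring A] (ι : R →+* A) {n : ℕ}
    (x : Fin n → A) (h : IsSkewPBWExtension ι x) :
    ∀ i : Fin n, ∃ σ : R →+* R, Function.Injective σ ∧
      ∃ δ : R → R, (∀ r s : R, δ (r + s) = δ r + δ s) ∧
        (∀ r s : R, δ (r * s) = σ r * δ s + δ r * s) ∧
        ∀ r : R, x i * ι r = ι (σ r) * x i + ι (δ r) := fun i =>
  skewPBW_exists_sigma_delta_general (h.affineForm_injective i) (h.var_coeff i)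
end
end

section
/- Let R be a semiprime commutative ring with a derivation δ, and assume that the ring of constants of δ is a field F. Let P be an element of S = R[x; id_R, δ] of positive degree n such that n is invertible in F and the leading coefficient of P is invertible in R. Then C_S(P) is a free F[P]-module of rank at most n. -/
open Finsupp

noncomputable section

variable {R S : Type*}

/-- `S` is the Ore extension `R[x; σ, δ]` of `R` (embedded in `S` via `ι`):
`δ` is a `σ`-derivation of `R`, `S` is a free left `R`-module with basis `1, x, x², …`,
and `x * r = σ(r) * x + δ(r)` for all `r ∈ R`. -/
structure IsOreExtension [Ring R] [Ring S] (ι : R →+* S) (σ : R →+* R) (δ : R → R)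
    (x : S) : Prop where
  deriv_add : ∀ a b : R, δ (a + b) = δ a + δ b
  deriv_mul : ∀ a b : R, δ (a * b) = σ a * δ b + δ a * b
  repr_uniq : ∀ s : S, ∃! c : ℕ →₀ R, s = c.sum fun i r => ι r * x ^ i
  comm_rule : ∀ r : R, x * ι r = ι (σ r) * x + ι (δ r)

/-- The (unique) coefficient family of `s` with respect to the basis `1, x, x², …`. -/
def oreCoeff [Ring R] [Ring S] {ι : R →+* S} {σ : R →+* R} {δ : R → R} {x : S}
    (h : IsOreExtension ι σ δ x) (s : S) : ℕ →₀ R :=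
  (h.repr_uniq s).exists.choose

/-- The degree (in `x`) of an element of the Ore extension. -/
def oreDeg [Ring R] [Ring S] {ι : R →+* S} {σ : R →+* R} {δ : R → R} {x : S}
    (h : IsOreExtension ι σ δ x) (s : S) : ℕ :=
  (oreCoeff h s).support.sup id

/-- The leading coefficient (in `x`) of an element of the Ore extension. -/
def oreLeadCoeff [Ring R] [Ring S] {ι : R →+* S} {σ : R →+* R} {δ : R → R} {x : S}
    (h : IsOreExtension ι σ δ x) (s : S) : R :=
  oreCoeff h s (oreDeg h s)

/-- The centralizer of `a`: all elements commuting with `a`. -/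
def centralizerOf [Ring S] (a : S) : Set S := {b | b * a = a * b}

/-- The set of "polynomials in `P` with coefficients in `F`", i.e. all finite sums
`Σ_j ι(b_j) * P^j` with every `b_j ∈ F`. -/
def polysIn [Ring R] [Ring S] (ι : R →+* S) (F : Set R) (P : S) : Set S :=
  {s | ∃ d : ℕ →₀ R, (∀ j, d j ∈ F) ∧ s = d.sum fun j b => ι b * P ^ j}

/-- The subset `M` of `S` is a free module of rank at most `nbound` over the coefficient
subring `coeffs ⊆ S` (acting by left multiplication). -/
def IsFreeModuleOfRankAtMost [Ring S] (coeffs : Set S) (M : Set S) (nbound : ℕ) : Prop :=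
  ∃ m ≤ nbound, ∃ u : Fin m → S, (∀ i, u i ∈ M) ∧
    ∀ e ∈ M, ∃! c : Fin m → S, (∀ i, c i ∈ coeffs) ∧ e = ∑ i, c i * u i

/-- The subset `M` of `S` is a free module of finite rank over the coefficient
subring `coeffs ⊆ S` (acting by left multiplication). -/
def IsFreeModuleOfFiniteRank [Ring S] (coeffs : Set S) (M : Set S) : Prop :=
  ∃ m : ℕ, ∃ u : Fin m → S, (∀ i, u i ∈ M) ∧
    ∀ e ∈ M, ∃! c : Fin m → S, (∀ i, c i ∈ coeffs) ∧ e = ∑ i, c i * u i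

/-- A subset `F` of a ring is a field (with the induced operations): it is nontrivial and
every nonzero element of `F` has a multiplicative inverse lying in `F`. -/
def IsFieldSubset [Ring R] (F : Set R) : Prop :=
  (0 : R) ≠ 1 ∧ ∀ a ∈ F, a ≠ 0 → ∃ b ∈ F, a * b = 1

/-!
If `Q` commutes with `P`, and `P`, `Q` have leading terms `a * x ^ n`, `b * x ^ d`, then the
coefficient of `x ^ (n + d - 1)` in `[P, Q]` gives `n * a * δ b = d * b * δ a`. Hence
`b ^ n / a ^ d` is a constant; it is nonzero because `R` is reduced, so `b` is a unit. Moreover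
the solutions `b` for a given `d` are unique up to a constant factor, because `n` and `a` are
invertible.

For each residue class modulo `n` that contains the degree of a nonzero element of the centralizer,
choose such an element of minimal degree. A constant times a power of `P` times one of the chosen
elements cancels the leading term of any given element of the centralizer, so the chosen elements
span. In a combination with coefficients in `F[P]` the nonzero terms have distinct degrees modulo
`n` and unit leading coefficients, so they cannot cancel.
-/

section Filtration

variable [Ring R] [Ring S] {ι : R →+* S} {σ : R →+* R} {δ : R → R} {x s t : S}
  {b c : R} {d e : ℕ}

/-- The evaluation `c ↦ Σ ι(c i) * x ^ i` of coefficient families, as an additive map. -/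
def oreSum (ι : R →+* S) (x : S) : (ℕ →₀ R) →+ S :=
  liftAddHom fun i => (AddMonoidHom.mulRight (x ^ i)).comp ι.toAddMonoidHom

lemma oreSum_apply (c : ℕ →₀ R) : oreSum ι x c = c.sum fun i r => ι r * x ^ i := rfl

@[simp]
lemma oreSum_single (i : ℕ) (r : R) : oreSum ι x (single i r) = ι r * x ^ i := by
  simp [oreSum_apply]

lemma IsOreExtension.oreSum_injective (h : IsOreExtension ι σ δ x) :
    Function.Injective (oreSum ι x) :=
  fun _ c hc => (h.repr_uniq (oreSum ι x c)).unique hc.symm rfl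

lemma IsOreExtension.oreSum_oreCoeff (h : IsOreExtension ι σ δ x) (s : S) :
    oreSum ι x (oreCoeff h s) = s :=
  (h.repr_uniq s).exists.choose_spec.symm

/-- The elements of degree less than `d` in `x`, i.e. the left combinations of
`1, x, …, x ^ (d - 1)`. -/
def oreDegreeLT (ι : R →+* S) (x : S) (d : ℕ) : AddSubgroup S :=
  (supported R R (Set.Iio d)).toAddSubgroup.map (oreSum ι x)

lemma mem_oreDegreeLT_iff :
    s ∈ oreDegreeLT ι x d ↔ ∃ c : ℕ →₀ R, (∀ i, d ≤ i → c i = 0) ∧ oreSum ι x c = s := by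
  simp [oreDegreeLT, AddSubgroup.mem_map, mem_supported']

lemma oreDegreeLT_mono (hde : d ≤ e) : oreDegreeLT ι x d ≤ oreDegreeLT ι x e :=
  AddSubgroup.map_mono (supported_mono (R := R) (M := R) (Set.Iio_subset_Iio hde))

lemma eq_zero_of_mem_oreDegreeLT_zero (hs : s ∈ oreDegreeLT ι x 0) : s = 0 := by
  obtain ⟨c, hc, rfl⟩ := mem_oreDegreeLT_iff.1 hs
  rw [show c = 0 from Finsupp.ext fun i => hc i i.zero_le, map_zero]

lemma monomial_mem_oreDegreeLT (r : R) (hd : d < e) : ι r * x ^ d ∈ oreDegreeLT ι x e :=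
  mem_oreDegreeLT_iff.2
    ⟨single d r, fun _ hi => single_eq_of_ne (hd.trans_le hi).ne', oreSum_single d r⟩

lemma map_mem_of_mem_oreDegreeLT (f : S →+ S) {W : AddSubgroup S}
    (hf : ∀ r, ∀ i < d, f (ι r * x ^ i) ∈ W) (hs : s ∈ oreDegreeLT ι x d) : f s ∈ W := by
  obtain ⟨c, hc, rfl⟩ := mem_oreDegreeLT_iff.1 hs
  rw [oreSum_apply, Finsupp.sum, map_sum]
  refine sum_mem fun i hi => hf _ i ?_
  by_contra! hdi
  exact mem_support_iff.1 hi (hc i hdi)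

lemma scalar_mul_mem_oreDegreeLT (r : R) (hs : s ∈ oreDegreeLT ι x d) :
    ι r * s ∈ oreDegreeLT ι x d :=
  map_mem_of_mem_oreDegreeLT (AddMonoidHom.mulLeft (ι r)) (fun r' i hi => by
    simpa [← mul_assoc] using monomial_mem_oreDegreeLT (ι := ι) (x := x) (r * r') hi) hs

lemma mul_x_pow_mem_oreDegreeLT (k : ℕ) (hs : s ∈ oreDegreeLT ι x d) :
    s * x ^ k ∈ oreDegreeLT ι x (d + k) :=
  map_mem_of_mem_oreDegreeLT (AddMonoidHom.mulRight (x ^ k)) (fun r i hi => by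
    simpa [mul_assoc, ← pow_add] using monomial_mem_oreDegreeLT r (by lia : i + k < d + k)) hs

lemma IsOreExtension.x_mul_mem_oreDegreeLT (h : IsOreExtension ι σ δ x)
    (hs : s ∈ oreDegreeLT ι x d) : x * s ∈ oreDegreeLT ι x (d + 1) := by
  refine map_mem_of_mem_oreDegreeLT (AddMonoidHom.mulLeft x) (fun r i hi => ?_) hs
  have hxr : x * (ι r * x ^ i) = ι (σ r) * x ^ (i + 1) + ι (δ r) * x ^ i := by
    rw [← mul_assoc, h.comm_rule, add_mul, mul_assoc, pow_succ']
  rw [AddMonoidHom.coe_mulLeft, hxr]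
  exact add_mem (monomial_mem_oreDegreeLT _ (by lia)) (monomial_mem_oreDegreeLT _ (by lia))

/-- `s` is `ι b * x ^ d` up to terms of degree less than `d`. The coefficient `b` may be zero,
so that every element of degree at most `d` has a leading term in this sense. -/
def HasLeadingTerm (ι : R →+* S) (x s : S) (d : ℕ) (b : R) : Prop :=
  s - ι b * x ^ d ∈ oreDegreeLT ι x d

lemma hasLeadingTerm_zero_right : HasLeadingTerm ι x s d 0 ↔ s ∈ oreDegreeLT ι x d := by
  simp [HasLeadingTerm]

lemma hasLeadingTerm_monomial (b : R) (d : ℕ) : HasLeadingTerm ι x (ι b * x ^ d) d b := by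
  simp [HasLeadingTerm]

lemma hasLeadingTerm_scalar (b : R) : HasLeadingTerm ι x (ι b) 0 b := by
  simpa using hasLeadingTerm_monomial (ι := ι) (x := x) b 0

lemma hasLeadingTerm_oreSum (c : ℕ →₀ R) (hc : ∀ i, d < i → c i = 0) :
    HasLeadingTerm ι x (oreSum ι x c) d (c d) := by
  refine mem_oreDegreeLT_iff.2 ⟨c - single d (c d), fun i hi => ?_, by simp⟩
  rcases hi.eq_or_lt with rfl | hi
  · simp
  · simp [hc i hi, single_eq_of_ne hi.ne']

lemma exists_hasLeadingTerm (hs : s ∈ oreDegreeLT ι x (d + 1)) :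
    ∃ b, HasLeadingTerm ι x s d b := by
  obtain ⟨c, hc, rfl⟩ := mem_oreDegreeLT_iff.1 hs
  exact ⟨c d, hasLeadingTerm_oreSum c hc⟩

namespace HasLeadingTerm

lemma mem_oreDegreeLT (hs : HasLeadingTerm ι x s d b) : s ∈ oreDegreeLT ι x (d + 1) := by
  simpa using add_mem (oreDegreeLT_mono d.le_succ hs) (monomial_mem_oreDegreeLT b d.lt_succ_self)

lemma add (hs : HasLeadingTerm ι x s d b) (ht : HasLeadingTerm ι x t d c) :
    HasLeadingTerm ι x (s + t) d (b + c) := by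
  simpa [HasLeadingTerm, add_mul, add_sub_add_comm] using add_mem hs ht

lemma sub (hs : HasLeadingTerm ι x s d b) (ht : HasLeadingTerm ι x t d c) :
    HasLeadingTerm ι x (s - t) d (b - c) := by
  simpa [HasLeadingTerm, sub_mul, sub_sub_sub_comm] using sub_mem hs ht

lemma scalar_mul (r : R) (hs : HasLeadingTerm ι x s d b) :
    HasLeadingTerm ι x (ι r * s) d (r * b) := by
  simpa [HasLeadingTerm, mul_sub, mul_assoc] using scalar_mul_mem_oreDegreeLT r hs

lemma mul_x_pow (hs : HasLeadingTerm ι x s d b) (k : ℕ) :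
    HasLeadingTerm ι x (s * x ^ k) (d + k) b := by
  simpa [HasLeadingTerm, sub_mul, mul_assoc, pow_add] using mul_x_pow_mem_oreDegreeLT k hs

lemma x_mul (h : IsOreExtension ι σ δ x) (hs : HasLeadingTerm ι x s d b) :
    HasLeadingTerm ι x (x * s) (d + 1) (σ b) := by
  have key := add_mem (h.x_mul_mem_oreDegreeLT hs)
    (monomial_mem_oreDegreeLT (ι := ι) (x := x) (δ b) d.lt_succ_self)
  rw [HasLeadingTerm]
  convert key using 1
  rw [mul_sub, ← mul_assoc, h.comm_rule, add_mul, mul_assoc, ← pow_succ']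
  abel

lemma x_pow_mul (h : IsOreExtension ι σ δ x) (k : ℕ) (hs : HasLeadingTerm ι x s d b) :
    HasLeadingTerm ι x (x ^ k * s) (k + d) (σ^[k] b) := by
  induction k with
  | zero => simpa using hs
  | succ k ih =>
    simpa [pow_succ', mul_assoc, Function.iterate_succ_apply', Nat.add_right_comm] using ih.x_mul h

lemma mul_mem_oreDegreeLT (h : IsOreExtension ι σ δ x) (hs : s ∈ oreDegreeLT ι x d)
    (ht : HasLeadingTerm ι x t e c) : s * t ∈ oreDegreeLT ι x (d + e) := by
  refine map_mem_of_mem_oreDegreeLT (AddMonoidHom.mulRight t) (fun r i hi => ?_) hs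
  simpa [mul_assoc] using
    oreDegreeLT_mono (by lia) ((ht.x_pow_mul h i).scalar_mul r).mem_oreDegreeLT

lemma mul_twisted (h : IsOreExtension ι σ δ x) (hs : HasLeadingTerm ι x s d b)
    (ht : HasLeadingTerm ι x t e c) : HasLeadingTerm ι x (s * t) (d + e) (b * σ^[d] c) := by
  have key := ((ht.x_pow_mul h d).scalar_mul b).add
    (hasLeadingTerm_zero_right.2 (mul_mem_oreDegreeLT h hs ht))
  simpa [sub_mul, mul_assoc] using key

lemma eq_zero (h : IsOreExtension ι σ δ x) (hb : HasLeadingTerm ι x 0 d b) : b = 0 := by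
  obtain ⟨c, hc, hsum⟩ := mem_oreDegreeLT_iff.1 hb
  have hc_eq : c = -single d b := h.oreSum_injective (by simp [hsum])
  simpa [hc_eq] using hc d le_rfl

end HasLeadingTerm

lemma exists_hasLeadingTerm_sum {I : Type*} {A : Finset I} (hA : A.Nonempty) {f : I → S}
    {g : I → ℕ} {b : I → R} (hf : ∀ i ∈ A, HasLeadingTerm ι x (f i) (g i) (b i))
    (hg : Set.InjOn g A) : ∃ i ∈ A, HasLeadingTerm ι x (∑ j ∈ A, f j) (g i) (b i) := by
  classical
  obtain ⟨i, hi, hmax⟩ := A.exists_max_image g hA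
  have hrest : ∑ j ∈ A.erase i, f j ∈ oreDegreeLT ι x (g i) := sum_mem fun j hj => by
    obtain ⟨hji, hj⟩ := Finset.mem_erase.1 hj
    exact oreDegreeLT_mono ((hmax j hj).lt_of_ne (hg.ne hj hi hji)) (hf j hj).mem_oreDegreeLT
  refine ⟨i, hi, ?_⟩
  rw [← Finset.add_sum_erase A f hi]
  simpa using (hf i hi).add (hasLeadingTerm_zero_right.2 hrest)

namespace IsOreExtension

lemma oreCoeff_eq_zero_of_oreDeg_lt (h : IsOreExtension ι σ δ x) {i : ℕ} (hi : oreDeg h s < i) :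
    oreCoeff h s i = 0 :=
  notMem_support_iff.1 fun hmem => hi.not_ge (Finset.le_sup (f := id) hmem)

lemma hasLeadingTerm_oreLeadCoeff (h : IsOreExtension ι σ δ x) (s : S) :
    HasLeadingTerm ι x s (oreDeg h s) (oreLeadCoeff h s) := by
  simpa only [oreLeadCoeff, h.oreSum_oreCoeff] using
    hasLeadingTerm_oreSum (ι := ι) (x := x) (oreCoeff h s) fun _ => h.oreCoeff_eq_zero_of_oreDeg_lt

end IsOreExtension

end Filtration

section PolysIn

variable [Ring R] [Ring S]

/-- `polysIn` with coefficients in an additive subgroup, as an additive subgroup. -/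
def polysInAddSubgroup (ι : R →+* S) (A : AddSubgroup R) (P : S) : AddSubgroup S where
  carrier := polysIn ι A P
  zero_mem' := ⟨0, fun _ => A.zero_mem, by simp⟩
  add_mem' := by
    rintro _ _ ⟨c, hc, rfl⟩ ⟨d, hd, rfl⟩
    exact ⟨c + d, fun j => A.add_mem (hc j) (hd j), (map_add (oreSum ι P) c d).symm⟩
  neg_mem' := by
    rintro _ ⟨c, hc, rfl⟩
    exact ⟨-c, fun j => A.neg_mem (hc j), (map_neg (oreSum ι P) c).symm⟩

lemma monomial_mem_polysInAddSubgroup (ι : R →+* S) {A : AddSubgroup R} (P : S) {r : R}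
    (hr : r ∈ A) (k : ℕ) : ι r * P ^ k ∈ polysInAddSubgroup ι A P := by
  classical
  refine ⟨single k r, fun j => ?_, by simp⟩
  rw [single_apply]
  split_ifs
  exacts [hr, A.zero_mem]

/-- The additive group of constants of the skew derivation of an Ore extension. -/
def IsOreExtension.constants {ι : R →+* S} {σ : R →+* R} {δ : R → R} {x : S}
    (h : IsOreExtension ι σ δ x) : AddSubgroup R :=
  (AddMonoidHom.mk' δ h.deriv_add).ker

end PolysIn

section LeadingCoefficients

variable {A : Type*} [CommRing A] [CommRing R] [Algebra A R] (D : Derivation A R R)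
  {a b c : R} {n d : ℕ}

-- The equation `n * a * D b = d * b * D a` is the vanishing of the logarithmic derivative
-- of `b ^ n / a ^ d`.
lemma derivation_pow_mul_inv_pow_eq_zero {a' : R} (haa' : a * a' = 1) (hn : n ≠ 0)
    (hab : n * a * D b = d * b * D a) : D (b ^ n * a' ^ d) = 0 := by
  have hDa' : D a' = -a' ^ 2 * D a :=
    D.leibniz_of_mul_eq_one (by rw [mul_comm, haa'])
  obtain ⟨m, rfl⟩ := Nat.exists_eq_succ_of_ne_zero hn
  have hpow : (d : R) * a' ^ (d - 1) * a' = d * a' ^ d := by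
    cases d <;> simp [pow_succ, mul_assoc]
  rw [D.leibniz, D.leibniz_pow, D.leibniz_pow, hDa']
  simp only [smul_eq_mul, nsmul_eq_mul, Nat.succ_eq_add_one, Nat.add_sub_cancel] at hab ⊢
  linear_combination b ^ m * a' ^ (d + 1) * hab
    - b ^ (m + 1) * a' * D a * hpow - (m + 1 : ℕ) * b ^ m * a' ^ d * D b * haa'

lemma isUnit_of_derivation_eq [IsReduced R] (hD : ∀ r, D r = 0 → r ≠ 0 → IsUnit r) (hn : n ≠ 0)
    (ha : IsUnit a) (hb : b ≠ 0) (hab : n * a * D b = d * b * D a) : IsUnit b := by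
  obtain ⟨a', haa'⟩ := ha.exists_right_inv
  have ha' : IsUnit (a' ^ d) := (IsUnit.of_mul_eq_one_right a haa').pow d
  have hconst := derivation_pow_mul_inv_pow_eq_zero D haa' hn hab
  have hne : b ^ n * a' ^ d ≠ 0 := mt ha'.mul_left_eq_zero.1 (pow_ne_zero n hb)
  exact (isUnit_pow_iff hn).1 (isUnit_of_mul_isUnit_left (hD _ hconst hne))

lemma exists_constant_mul_eq (hn : IsUnit (n : R)) (ha : IsUnit a) (hc : IsUnit c)
    (hab : n * a * D b = d * b * D a) (hac : n * a * D c = d * c * D a) :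
    ∃ l, D l = 0 ∧ l * c = b := by
  obtain ⟨c', hcc'⟩ := hc.exists_right_inv
  have hDc' : D c' = -c' ^ 2 * D c :=
    D.leibniz_of_mul_eq_one (by rw [mul_comm, hcc'])
  refine ⟨b * c', (hn.mul ha).mul_right_eq_zero.1 ?_, ?_⟩
  · rw [D.leibniz, hDc', smul_eq_mul, smul_eq_mul]
    linear_combination c' * hab - b * c' ^ 2 * hac - d * b * c' * D a * hcc'
  · linear_combination b * hcc'

end LeadingCoefficients

section DifferentialOperators

variable [CommRing R] [Ring S] {ι : R →+* S} {δ : R → R} {x s t P Q U : S} {a b c r : R}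
  {d e g k n : ℕ}

namespace IsOreExtension

/-- When the twist is the identity, `δ` is a derivation in the sense of the library. -/
def derivation (h : IsOreExtension ι (RingHom.id R) δ x) : Derivation ℤ R R :=
  .mk' (AddMonoidHom.mk' δ h.deriv_add).toIntLinearMap fun a b => by
    simp [h.deriv_mul, mul_comm b]

lemma commute_scalar_of_constant (h : IsOreExtension ι (RingHom.id R) δ x) (hr : δ r = 0) (s : S) :
    Commute (ι r) s := by
  have hx : Commute (ι r) x := by
    simp [commute_iff_eq, h.comm_rule, hr]
  rw [← h.oreSum_oreCoeff s, oreSum_apply]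
  exact .sum_right _ _ _ fun i _ => ((Commute.all r _).map ι).mul_right (hx.pow_right i)

lemma hasLeadingTerm_commutator_x_pow (h : IsOreExtension ι (RingHom.id R) δ x) (r : R) (d : ℕ) :
    HasLeadingTerm ι x (x ^ (d + 1) * ι r - ι r * x ^ (d + 1)) d ((d + 1 : ℕ) * δ r) := by
  induction d with
  | zero => simpa [h.comm_rule] using hasLeadingTerm_scalar (δ r)
  | succ d ih =>
    have hsplit : x ^ (d + 2) * ι r - ι r * x ^ (d + 2) =
        x * (x ^ (d + 1) * ι r - ι r * x ^ (d + 1)) + ι (δ r) * x ^ (d + 1) := by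
      have hδ : ι (δ r) = x * ι r - ι r * x := by simp [h.comm_rule]
      rw [hδ, pow_succ' x (d + 1)]
      noncomm_ring
    rw [hsplit]
    convert (ih.x_mul h).add (hasLeadingTerm_monomial (δ r) (d + 1)) using 1
    rw [RingHom.id_apply]
    push_cast
    ring

lemma hasLeadingTerm_scalar_mul_commutator_mul_x_pow (h : IsOreExtension ι (RingHom.id R) δ x)
    (b c : R) (hk : d + e = k + 1) :
    HasLeadingTerm ι x (ι b * (x ^ d * ι c - ι c * x ^ d) * x ^ e) k (d * b * δ c) := by
  rcases d with _ | d
  · simp [hasLeadingTerm_zero_right, zero_mem]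
  · obtain rfl : k = d + e := by lia
    convert ((h.hasLeadingTerm_commutator_x_pow c d).scalar_mul b).mul_x_pow e using 1
    ring

lemma hasLeadingTerm_commutator_monomial (h : IsOreExtension ι (RingHom.id R) δ x) (b c : R)
    (hk : d + e = k + 1) :
    HasLeadingTerm ι x (ι b * x ^ d * (ι c * x ^ e) - ι c * x ^ e * (ι b * x ^ d)) k
      (d * b * δ c - e * c * δ b) := by
  have hbc : ι b * ι c = ι c * ι b := (Commute.all b c).map ι
  have hx : x ^ d * x ^ e = x ^ e * x ^ d := Commute.pow_pow_self x d e
  convert (h.hasLeadingTerm_scalar_mul_commutator_mul_x_pow b c hk).sub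
    (h.hasLeadingTerm_scalar_mul_commutator_mul_x_pow c b (by lia : e + d = k + 1)) using 1
  simp only [mul_sub, sub_mul, mul_assoc, hx]
  simp only [← mul_assoc, hbc]
  abel

end IsOreExtension

namespace HasLeadingTerm

lemma mul (h : IsOreExtension ι (RingHom.id R) δ x) (hs : HasLeadingTerm ι x s d b)
    (ht : HasLeadingTerm ι x t e c) : HasLeadingTerm ι x (s * t) (d + e) (b * c) := by
  simpa using hs.mul_twisted h ht

lemma pow (h : IsOreExtension ι (RingHom.id R) δ x) (hs : HasLeadingTerm ι x s d b) (k : ℕ) :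
    HasLeadingTerm ι x (s ^ k) (d * k) (b ^ k) := by
  induction k with
  | zero => simpa using hasLeadingTerm_scalar (ι := ι) (x := x) 1
  | succ k ih => simpa only [pow_succ, mul_add_one] using ih.mul h hs

lemma scalar_mul_pow (h : IsOreExtension ι (RingHom.id R) δ x) (hs : HasLeadingTerm ι x s d b)
    (r : R) (k : ℕ) : HasLeadingTerm ι x (ι r * s ^ k) (d * k) (r * b ^ k) :=
  (hs.pow h k).scalar_mul r

end HasLeadingTerm

lemma IsOreExtension.commutator_mem_oreDegreeLT (h : IsOreExtension ι (RingHom.id R) δ x)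
    (hk : d + e ≤ k + 2) (hs : s ∈ oreDegreeLT ι x d) (ht : t ∈ oreDegreeLT ι x e) :
    s * t - t * s ∈ oreDegreeLT ι x k := by
  rcases d with _ | d
  · simp [eq_zero_of_mem_oreDegreeLT_zero hs, zero_mem]
  rcases e with _ | e
  · simp [eq_zero_of_mem_oreDegreeLT_zero ht, zero_mem]
  obtain ⟨b, hb⟩ := exists_hasLeadingTerm hs
  obtain ⟨c, hc⟩ := exists_hasLeadingTerm ht
  have hcomm : HasLeadingTerm ι x (s * t - t * s) (d + e) 0 := by
    rw [← sub_self (b * c)]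
    exact (hb.mul h hc).sub (add_comm e d ▸ mul_comm c b ▸ hc.mul h hb)
  exact oreDegreeLT_mono (by lia) (hasLeadingTerm_zero_right.1 hcomm)

lemma HasLeadingTerm.commutator (h : IsOreExtension ι (RingHom.id R) δ x)
    (hs : HasLeadingTerm ι x s d b) (ht : HasLeadingTerm ι x t e c) (hk : d + e = k + 1) :
    HasLeadingTerm ι x (s * t - t * s) k (d * b * δ c - e * c * δ b) := by
  have hs' := h.commutator_mem_oreDegreeLT (k := k) (by lia) hs ht.mem_oreDegreeLT
  have ht' := h.commutator_mem_oreDegreeLT (k := k) (by lia)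
    (hasLeadingTerm_monomial b d).mem_oreDegreeLT ht
  convert (h.hasLeadingTerm_commutator_monomial b c hk).add
    (hasLeadingTerm_zero_right.2 (add_mem hs' ht')) using 1
  · noncomm_ring
  · rw [add_zero]

lemma HasLeadingTerm.deriv_eq_of_commute (h : IsOreExtension ι (RingHom.id R) δ x)
    (hP : HasLeadingTerm ι x P n a) (hQ : HasLeadingTerm ι x Q d b) (hQP : Commute Q P) :
    n * a * δ b = d * b * δ a := by
  rcases hk : n + d with _ | k
  · obtain ⟨rfl, rfl⟩ := Nat.add_eq_zero_iff.1 hk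
    simp
  · have hbracket := hP.commutator h hQ hk
    rw [hQP.eq, sub_self] at hbracket
    exact sub_eq_zero.1 (hbracket.eq_zero h)

lemma IsFieldSubset.isUnit {F : Set R} (hF : IsFieldSubset F) (ha : a ∈ F)
    (ha0 : a ≠ 0) : IsUnit a :=
  let ⟨b, _, hab⟩ := hF.2 a ha ha0
  .of_mul_eq_one b hab

/-- The degrees of the nonzero elements of the centralizer of `P`. -/
def centralizerDegrees (ι : R →+* S) (x P : S) : Set ℕ :=
  {d | ∃ Q ∈ centralizerOf P, ∃ b ≠ 0, HasLeadingTerm ι x Q d b}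

namespace IsOreExtension

lemma isUnit_leadingCoeff_of_commute [IsReduced R] (h : IsOreExtension ι (RingHom.id R) δ x)
    (hF : IsFieldSubset {a : R | δ a = 0}) (hn : n ≠ 0) (ha : IsUnit a)
    (hP : HasLeadingTerm ι x P n a) (hQ : HasLeadingTerm ι x Q d b) (hb : b ≠ 0)
    (hQP : Commute Q P) : IsUnit b :=
  isUnit_of_derivation_eq h.derivation (fun _ => hF.isUnit) hn ha hb
    (hP.deriv_eq_of_commute h hQ hQP)

lemma exists_sub_mul_mem_oreDegreeLT (h : IsOreExtension ι (RingHom.id R) δ x)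
    (hn : IsUnit (n : R)) (ha : IsUnit a) (hP : HasLeadingTerm ι x P n a)
    (hQ : HasLeadingTerm ι x Q d b) (hQP : Commute Q P)
    (hU : HasLeadingTerm ι x U g c) (hc : IsUnit c) (hUP : Commute U P)
    (hgd : g ≤ d) (hmod : g ≡ d [MOD n]) :
    ∃ f ∈ polysInAddSubgroup ι h.constants P, Commute f P ∧ Q - f * U ∈ oreDegreeLT ι x d := by
  obtain ⟨k, hk⟩ := (Nat.modEq_iff_dvd' hgd).1 hmod
  obtain rfl : d = n * k + g := by lia
  have hPU : HasLeadingTerm ι x (P ^ k * U) (n * k + g) (a ^ k * c) := (hP.pow h k).mul h hU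
  have hPUP : Commute (P ^ k * U) P := (Commute.pow_self P k).mul_left hUP
  obtain ⟨l, hl, rfl⟩ := exists_constant_mul_eq h.derivation hn ha ((ha.pow k).mul hc)
    (hP.deriv_eq_of_commute h hQ hQP) (hP.deriv_eq_of_commute h hPU hPUP)
  refine ⟨ι l * P ^ k, monomial_mem_polysInAddSubgroup ι P hl k,
    (h.commute_scalar_of_constant hl P).mul_left (Commute.pow_self P k), ?_⟩
  rw [← hasLeadingTerm_zero_right, ← sub_self (l * (a ^ k * c)), mul_assoc]
  exact hQ.sub (hPU.scalar_mul l)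

lemma exists_eq_sum_mul (h : IsOreExtension ι (RingHom.id R) δ x)
    (hn : IsUnit (n : R)) (ha : IsUnit a) (hP : HasLeadingTerm ι x P n a)
    {I : Type*} [Fintype I] {u : I → S} {g : I → ℕ} {b : I → R}
    (hu : ∀ i, HasLeadingTerm ι x (u i) (g i) (b i)) (hb : ∀ i, IsUnit (b i))
    (huP : ∀ i, Commute (u i) P)
    (hg : ∀ d ∈ centralizerDegrees ι x P, ∃ i, g i ≤ d ∧ g i ≡ d [MOD n])
    (hQ : Q ∈ oreDegreeLT ι x d) (hQP : Commute Q P) :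
    ∃ c : I → S, (∀ i, c i ∈ polysInAddSubgroup ι h.constants P) ∧ Q = ∑ i, c i * u i := by
  classical
  induction d generalizing Q with
  | zero => exact ⟨0, fun _ => zero_mem _, by simp [eq_zero_of_mem_oreDegreeLT_zero hQ]⟩
  | succ d ih =>
    obtain ⟨q, hq⟩ := exists_hasLeadingTerm hQ
    rcases eq_or_ne q 0 with rfl | hq0
    · exact ih (hasLeadingTerm_zero_right.1 hq) hQP
    obtain ⟨i, hgd, hmod⟩ := hg d ⟨Q, hQP, q, hq0, hq⟩
    obtain ⟨f, hf, hfP, hlow⟩ :=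
      h.exists_sub_mul_mem_oreDegreeLT hn ha hP hq hQP (hu i) (hb i) (huP i) hgd hmod
    obtain ⟨c, hc, hsum⟩ := ih hlow (hQP.sub_left (hfP.mul_left (huP i)))
    refine ⟨c + Pi.single i f, fun j => add_mem (hc j) ?_, ?_⟩
    · rw [Pi.single_apply]
      split_ifs
      exacts [hf, zero_mem _]
    · simp [add_mul, Finset.sum_add_distrib, ← hsum, Pi.single_apply, ite_mul]

lemma exists_hasLeadingTerm_of_mem_polysIn (h : IsOreExtension ι (RingHom.id R) δ x)
    (hF : IsFieldSubset {a : R | δ a = 0}) (hn : 0 < n) (ha : IsUnit a)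
    (hP : HasLeadingTerm ι x P n a) (hs : s ∈ polysInAddSubgroup ι h.constants P) (hs0 : s ≠ 0) :
    ∃ k b, IsUnit b ∧ HasLeadingTerm ι x s (n * k) b := by
  obtain ⟨c, hc, rfl⟩ := hs
  have hne : c.support.Nonempty := support_nonempty_iff.2 (by rintro rfl; simp at hs0)
  obtain ⟨k, hk, hlead⟩ := exists_hasLeadingTerm_sum hne
    (fun j _ => hP.scalar_mul_pow h (c j) j) (mul_right_injective₀ hn.ne').injOn
  exact ⟨k, c k * a ^ k, (hF.isUnit (hc k) (mem_support_iff.1 hk)).mul (ha.pow k), hlead⟩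

lemma eq_zero_of_sum_mul_eq_zero (h : IsOreExtension ι (RingHom.id R) δ x)
    (hF : IsFieldSubset {a : R | δ a = 0}) (hn : 0 < n) (ha : IsUnit a)
    (hP : HasLeadingTerm ι x P n a)
    {I : Type*} [Fintype I] {u : I → S} {g : I → ℕ} {b : I → R}
    (hu : ∀ i, HasLeadingTerm ι x (u i) (g i) (b i)) (hb : ∀ i, IsUnit (b i))
    (hg : Function.Injective fun i => g i % n)
    {c : I → S} (hc : ∀ i, c i ∈ polysInAddSubgroup ι h.constants P)
    (hsum : ∑ i, c i * u i = 0) : c = 0 := by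
  classical
  have : Nontrivial R := ⟨0, 1, hF.1⟩
  by_contra hc0
  obtain ⟨i₀, hi₀⟩ := Function.ne_iff.1 hc0
  let A : Finset I := {i | c i ≠ 0}
  have hlead : ∀ i ∈ A, ∃ k q, IsUnit q ∧ HasLeadingTerm ι x (c i) (n * k) q := fun i hi =>
    h.exists_hasLeadingTerm_of_mem_polysIn hF hn ha hP (hc i) (by simpa [A] using hi)
  choose! k q hq hcq using hlead
  have hdistinct : Set.InjOn (fun i => n * k i + g i) A := fun i _ j _ hij => by
    apply hg
    simpa [Nat.mul_add_mod] using congrArg (· % n) hij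
  obtain ⟨i, hi, htop⟩ := exists_hasLeadingTerm_sum ⟨i₀, by simpa [A] using hi₀⟩
    (fun i hi => (hcq i hi).mul h (hu i)) hdistinct
  have hsumA : ∑ j ∈ A, c j * u j = 0 := by
    rw [← hsum]
    exact Finset.sum_subset A.subset_univ fun j _ hj => by simp_all [A]
  rw [hsumA] at htop
  exact ((hq i hi).mul (hb i)).ne_zero (htop.eq_zero h)

end IsOreExtension

end DifferentialOperators

lemma exists_minimal_residue_representatives (T : Set ℕ) {n : ℕ} (hn : 0 < n) :
    ∃ m ≤ n, ∃ g : Fin m → ℕ, (∀ i, g i ∈ T) ∧ Function.Injective (fun i => g i % n) ∧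
      ∀ d ∈ T, ∃ i, g i ≤ d ∧ g i ≡ d [MOD n] := by
  classical
  let M : Set ℕ := {d | d ∈ T ∧ ∀ e ∈ T, e ≡ d [MOD n] → d ≤ e}
  have hinj : Set.InjOn (· % n) M := fun d hd e he hde =>
    le_antisymm (hd.2 e he.1 hde.symm) (he.2 d hd.1 hde)
  have hmaps : Set.MapsTo (· % n) M (Finset.range n) := fun d _ => by
    simpa using Nat.mod_lt d hn
  have hM : M.Finite := .of_injOn hmaps hinj (Finset.range n).finite_toSet
  let E := hM.toFinset.equivFin
  have hEM (i) : (E.symm i : ℕ) ∈ M := hM.mem_toFinset.1 (E.symm i).2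
  refine ⟨hM.toFinset.card, ?_, fun i => E.symm i, fun i => (hEM i).1, fun i j hij =>
    E.symm.injective (Subtype.ext (hinj (hEM i) (hEM j) hij)), fun d hd => ?_⟩
  · simpa using Finset.card_le_card_of_injOn (s := hM.toFinset) (t := Finset.range n) (· % n)
      (by simpa using hmaps) (by simpa using hinj)
  · have hex : ∃ e, e ∈ T ∧ e ≡ d [MOD n] := ⟨d, hd, rfl⟩
    obtain ⟨hT, hmod⟩ := Nat.find_spec hex
    have hmem : Nat.find hex ∈ M := ⟨hT, fun e he hed => Nat.find_min' hex ⟨he, hed.trans hmod⟩⟩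
    refine ⟨E ⟨Nat.find hex, hM.mem_toFinset.2 hmem⟩, ?_⟩
    simp only [E.symm_apply_apply]
    exact ⟨Nat.find_min' hex ⟨hd, rfl⟩, hmod⟩

/-- **Goodearl, Theorem 1.2.** Let `R` be a semiprime commutative ring with a
derivation `δ` whose ring of constants is a field `F`. If `P ∈ S = R[x; id, δ]` has
positive degree `n`, `n` is invertible in `F`, and the leading coefficient of `P` is
invertible in `R`, then `C_S(P)` is a free `F[P]`-module of rank at most `n`. -/
theorem goodearl_centralizer_free [CommRing R] [Ring S]
    (hsemiprime : ∀ a : R, IsNilpotent a → a = 0)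
    (ι : R →+* S) (δ : R → R) (x : S) (h : IsOreExtension ι (RingHom.id R) δ x)
    (hF : IsFieldSubset {a : R | δ a = 0})
    (P : S) (n : ℕ) (hn : 0 < n) (hdeg : oreDeg h P = n)
    (hninv : ∃ b : R, δ b = 0 ∧ (n : R) * b = 1)
    (hlc : IsUnit (oreLeadCoeff h P)) :
    IsFreeModuleOfRankAtMost (polysIn ι {a : R | δ a = 0} P) (centralizerOf P) n := by
  have : IsReduced R := ⟨hsemiprime⟩
  have hP : HasLeadingTerm ι x P n (oreLeadCoeff h P) := hdeg ▸ h.hasLeadingTerm_oreLeadCoeff P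
  obtain ⟨n', -, hn'⟩ := hninv
  have hnR : IsUnit (n : R) := .of_mul_eq_one n' hn'
  obtain ⟨m, hmn, g, hgT, hginj, hgmin⟩ :=
    exists_minimal_residue_representatives (centralizerDegrees ι x P) hn
  choose u huP b hb hu using hgT
  have hbu (i) : IsUnit (b i) :=
    h.isUnit_leadingCoeff_of_commute hF hn.ne' hlc hP (hu i) (hb i) (huP i)
  refine ⟨m, hmn, u, huP, fun Q hQP => existsUnique_of_exists_of_unique ?_ ?_⟩
  · exact h.exists_eq_sum_mul hnR hlc hP hu hbu huP hgmin
      (h.hasLeadingTerm_oreLeadCoeff Q).mem_oreDegreeLT hQP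
  · rintro c c' ⟨hc, rfl⟩ ⟨hc', heq⟩
    exact sub_eq_zero.1 <| h.eq_zero_of_sum_mul_eq_zero hF hn hlc hP hu hbu hginj
      (fun i => sub_mem (hc i) (hc' i)) (by simp [sub_mul, heq])
end
end

section
/- Let R be a semiprime commutative ring of positive characteristic with a derivation δ. If the ring of constants of δ is a field, then R itself is a field. -/
open Finsupp

noncomputable section

variable {R S : Type*}

theorem IsFieldSubset.isField_of_forall_exists_pow_mem [CommRing R] [IsReduced R] {F : Set R}
    (hF : IsFieldSubset F) (hpow : ∀ a : R, ∃ n ≠ 0, a ^ n ∈ F) : IsField R where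
  exists_pair_ne := ⟨0, 1, hF.1⟩
  mul_comm := mul_comm
  mul_inv_cancel {a} ha := by
    obtain ⟨n, hn, hmem⟩ := hpow a
    obtain ⟨b, -, hb⟩ := hF.2 (a ^ n) hmem (pow_ne_zero n ha)
    have hunit : IsUnit a := (isUnit_pow_iff hn).mp (IsUnit.of_mul_eq_one b hb)
    exact hunit.exists_right_inv

section Derivation

variable {A M : Type*}

theorem derivation_pow_eq_zero_of_natCast_eq_zero [CommSemiring A] [CommSemiring R] [Algebra A R]
    [AddCommMonoid M] [Module A M] [Module R M] (D : Derivation A R M)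
    {n : ℕ} (hn : (n : R) = 0) (a : R) : D (a ^ n) = 0 := by
  rw [D.leibniz_pow, ← Nat.cast_smul_eq_nsmul R, hn, zero_smul]

theorem semiprime_posChar_constants_field_general [CommSemiring A] [CommRing R] [IsReduced R]
    [Algebra A R] [AddCommMonoid M] [Module A M] [Module R M] (D : Derivation A R M)
    {p : ℕ} (hp : p ≠ 0) [CharP R p] (hF : IsFieldSubset {a : R | D a = 0}) : IsField R :=
  hF.isField_of_forall_exists_pow_mem fun a ↦
    ⟨p, hp, derivation_pow_eq_zero_of_natCast_eq_zero D (CharP.cast_eq_zero R p) a⟩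

end Derivation

/-- **Goodearl.** Let `R` be a semiprime commutative ring of positive
characteristic with a derivation `δ`. If the ring of constants of `δ` is a field, then
`R` itself is a field. -/
theorem semiprime_posChar_constants_field [CommRing R]
    (hsemiprime : ∀ a : R, IsNilpotent a → a = 0)
    (p : ℕ) (hp : 0 < p) (hchar : CharP R p)
    (δ : R → R) (hadd : ∀ a b : R, δ (a + b) = δ a + δ b)
    (hmul : ∀ a b : R, δ (a * b) = a * δ b + δ a * b)
    (hF : IsFieldSubset {a : R | δ a = 0}) :
    IsField R := by
  have : IsReduced R := ⟨hsemiprime⟩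
  let D : Derivation ℤ R R := .mk' (AddMonoidHom.mk' δ hadd).toIntLinearMap fun a b ↦ by
    simp [hmul, mul_comm]
  exact semiprime_posChar_constants_field_general D hp.ne' hF
end
end

section
/- Let R be a semiprime commutative ring with a derivation δ such that the ring of constants is a field F. Let P and Q be commuting elements of R[x; id_R, δ], where P has positive degree and invertible leading coefficient. Then there exists a nonzero polynomial f(s,t) ∈ F[s,t] such that f(P,Q) = 0. -/
open Finsupp

noncomputable section

variable {R S : Type*}

/-!
Write an element of `S = R[x; δ]` as `∑ rᵢ xⁱ` and let `n > 0` be the degree of `P`. The elements of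
degree `< n M` commuting with `P` form a vector space over the field of constants, and its
dimension grows at most linearly in `M`. The `N ^ 2` products `P ^ i * Q ^ j` with `i, j < N` lie in
such a space with `M` proportional to `N`, so they become linearly dependent for large `N`.

For the linear growth there are two cases. If `n ≠ 0` in `R`, comparing the subleading coefficients
of `s P` and `P s` shows that the coefficient of `x ^ M` of a commuting element `s` of degree `≤ M`
solves a first-order linear differential equation with unit leading coefficient, so the dimension
grows by at most `1` per degree. If `n = 0` in `R`, every `r ^ n` is a constant and `R` is a field.
Then `S / S P` is a finite-dimensional `R`-space on which `x` acts as a connection, and right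
multiplication by elements commuting with `P` gives endomorphisms compatible with this connection.
Constant-linearly independent horizontal vectors are `R`-linearly independent, so these
endomorphisms form a space of bounded dimension. The elements acting by zero are the `T P` with
`T` commuting with `P`, so raising the degree bound by `n` adds a bounded dimension.
-/

open Polynomial
open scoped Differential

section PolynomialCoefficients

theorem natDegree_mapCoeffs_le [CommRing R] [Differential R] (p : R[X]) :
    (Differential.mapCoeffs p).natDegree ≤ p.natDegree :=
  natDegree_le_iff_coeff_eq_zero.2 fun i hi => by
    rw [Differential.coeff_mapCoeffs, coeff_eq_zero_of_natDegree_lt hi, map_zero]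

theorem natDegree_iterate_mapCoeffs_le [CommRing R] [Differential R] (p : R[X]) (k : ℕ) :
    (Differential.mapCoeffs^[k] p).natDegree ≤ p.natDegree := by
  induction k with
  | zero => rfl
  | succ k ih =>
    rw [Function.iterate_succ_apply']
    exact (natDegree_mapCoeffs_le _).trans ih

variable [Semiring R] {p q : R[X]} {M n m : ℕ}

theorem natDegree_X_mul_derivative_le (p : R[X]) :
    (X * derivative p).natDegree ≤ p.natDegree := by
  refine natDegree_le_iff_coeff_eq_zero.2 fun i hi => ?_
  cases i with
  | zero => simp
  | succ i => rw [coeff_X_mul, coeff_derivative, coeff_eq_zero_of_natDegree_lt hi, zero_mul]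

theorem coeff_derivative_mul_eq_zero (hp : p.natDegree ≤ M) (hq : q.natDegree ≤ n)
    (hm : M + n ≤ m) : (derivative p * q).coeff m = 0 := by
  rw [← coeff_X_mul, ← mul_assoc]
  refine coeff_eq_zero_of_natDegree_lt (lt_of_le_of_lt ?_ (Nat.lt_succ_of_le hm))
  exact natDegree_mul_le_of_le ((natDegree_X_mul_derivative_le p).trans hp) hq

theorem coeff_derivative_mul (hp : p.natDegree ≤ M) (hq : q.natDegree ≤ n) (hm : m + 1 = M + n) :
    (derivative p * q).coeff m = M * p.coeff M * q.coeff n := by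
  rw [← coeff_X_mul, ← mul_assoc, hm, coeff_mul_add_eq_of_natDegree_le
    ((natDegree_X_mul_derivative_le p).trans hp) hq]
  congr 1
  cases M with
  | zero => simp
  | succ M => rw [coeff_X_mul, coeff_derivative, ← Nat.cast_succ, Nat.cast_comm]

end PolynomialCoefficients

section Symbol

variable [CommRing R] [Differential R] [Ring S] [Module R S]

/-- The symbol map of the differential operator ring `S = R[x; ′]`, sending `∑ rᵢ xⁱ` to the
commutative polynomial `∑ rᵢ Xⁱ`. It is encoded by its value at `1` and by the effect of
multiplying by `x` on the left, which acts on coefficients through `x r = r x + r′`. -/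
structure IsSymbolMap (x : S) (σ : S ≃ₗ[R] R[X]) : Prop where
  map_one : σ 1 = 1
  map_x_mul : ∀ s, σ (x * s) = X * σ s + Differential.mapCoeffs (σ s)

namespace IsSymbolMap

variable {x : S} {σ : S ≃ₗ[R] R[X]} (hσ : IsSymbolMap x σ)
include hσ

theorem map_x_pow_mul (j : ℕ) (s : S) :
    σ (x ^ j * s) = ∑ k ∈ Finset.range (j + 1),
      (X ^ (j - k) * Differential.mapCoeffs^[k] (σ s)) * (j.choose k : R[X]) := by
  let A : Module.End ℤ R[X] := LinearMap.mulLeft ℤ X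
  let D : Module.End ℤ R[X] := Differential.mapCoeffs.toLinearMap
  have hAD : Commute D A := by
    ext p : 1
    simp [A, D]
  have hiter : σ (x ^ j * s) = ((D + A) ^ j) (σ s) := by
    induction j with
    | zero => simp
    | succ j ih =>
      rw [pow_succ', mul_assoc, hσ.map_x_mul, ih, pow_succ' (D + A), Module.End.mul_apply, add_comm]
      rfl
  rw [hiter, hAD.add_pow, LinearMap.sum_apply]
  refine Finset.sum_congr rfl fun k _ => ?_
  rw [(hAD.pow_pow k (j - k)).eq, ← nsmul_eq_mul', LinearMap.smul_apply, nsmul_eq_mul',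
    Module.End.mul_apply, LinearMap.pow_mulLeft, LinearMap.mulLeft_apply, Module.End.pow_apply]
  rfl

theorem map_x_pow (j : ℕ) : σ (x ^ j) = X ^ j := by
  induction j with
  | zero => simpa using hσ.map_one
  | succ j ih => simp [pow_succ', hσ.map_x_mul, ih]

theorem x_mul_smul (r : R) (s : S) : x * r • s = r • (x * s) + r′ • s := by
  apply σ.injective
  simp only [hσ.map_x_mul, map_add, map_smul, smul_eq_C_mul, Derivation.leibniz,
    Differential.mapCoeffs_C, smul_eq_mul]
  ring

theorem symm_monomial (j : ℕ) (r : R) : σ.symm (monomial j r) = r • x ^ j := by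
  rw [LinearEquiv.symm_apply_eq, map_smul, hσ.map_x_pow, smul_X_eq_monomial]

variable [IsScalarTower R S S]

theorem map_mul (s t : S) {N : ℕ} (hN : (σ s).natDegree < N) :
    σ (s * t) =
      ∑ k ∈ Finset.range N, hasseDeriv k (σ s) * Differential.mapCoeffs^[k] (σ t) := by
  have hs : s = ∑ j ∈ Finset.range N, (σ s).coeff j • x ^ j := by
    rw [← σ.symm_apply_apply s]
    conv_lhs => rw [as_sum_range' (σ s) N hN]
    simp [hσ.symm_monomial]
  have hσs : ∀ k, hasseDeriv k (σ s) =
      ∑ j ∈ Finset.range N, (σ s).coeff j • ((j.choose k : R[X]) * X ^ (j - k)) := fun k => by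
    conv_lhs => rw [as_sum_range' (σ s) N hN, map_sum]
    refine Finset.sum_congr rfl fun j _ => ?_
    rw [hasseDeriv_monomial, ← C_mul_X_pow_eq_monomial, smul_eq_C_mul, mul_comm (j.choose k : R),
      C_mul, map_natCast, mul_assoc]
  conv_lhs => rw [hs]
  simp only [hσs, Finset.sum_mul, smul_mul_assoc, map_sum, map_smul]
  rw [Finset.sum_comm]
  refine Finset.sum_congr rfl fun j hj => ?_
  rw [hσ.map_x_pow_mul, ← Finset.smul_sum]
  congr 1
  rw [← Finset.sum_subset (Finset.range_subset_range.2 (Finset.mem_range.1 hj))]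
  · exact Finset.sum_congr rfl fun k _ => by ring
  · intro k _ hk
    rw [Nat.choose_eq_zero_of_lt (by simpa using hk), Nat.cast_zero, zero_mul, zero_mul]

theorem natDegree_map_mul_le (s t : S) :
    (σ (s * t)).natDegree ≤ (σ s).natDegree + (σ t).natDegree := by
  rw [hσ.map_mul s t (Nat.lt_succ_self _)]
  refine natDegree_sum_le_of_forall_le _ _ fun k _ => natDegree_mul_le_of_le ?_ ?_
  · exact (natDegree_hasseDeriv_le _ _).trans (Nat.sub_le _ _)
  · exact natDegree_iterate_mapCoeffs_le _ _

theorem mul_smul_of_deriv_eq_zero {k : R} (hk : k′ = 0) (s t : S) :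
    s * k • t = k • (s * t) := by
  have hcomm : Function.Commute Differential.mapCoeffs (k • · : R[X] → R[X]) := fun p => by
    simp [smul_eq_C_mul, Differential.mapCoeffs_C, hk]
  apply σ.injective
  rw [map_smul, hσ.map_mul s _ (Nat.lt_succ_self _), hσ.map_mul s _ (Nat.lt_succ_self _),
    Finset.smul_sum]
  refine Finset.sum_congr rfl fun j _ => ?_
  rw [map_smul, (hcomm.iterate_left j).eq, mul_smul_comm]

theorem coeff_map_mul_eq_coeff_add {s t : S} {M n m : ℕ} (hs : (σ s).natDegree ≤ M)
    (ht : (σ t).natDegree ≤ n) (hm : M + n ≤ m + 1) :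
    (σ (s * t)).coeff m =
      (σ s * σ t + derivative (σ s) * Differential.mapCoeffs (σ t)).coeff m := by
  have hvanish : ∀ k ∈ Finset.range M,
      (hasseDeriv (k + 2) (σ s) * Differential.mapCoeffs^[k + 2] (σ t)).coeff m = 0 := by
    intro k _
    rcases lt_or_ge (σ s).natDegree (k + 2) with hk | hk
    · rw [hasseDeriv_eq_zero_of_lt_natDegree _ _ hk, zero_mul, coeff_zero]
    · have := natDegree_mul_le_of_le (natDegree_hasseDeriv_le (σ s) (k + 2))
        (natDegree_iterate_mapCoeffs_le (σ t) (k + 2))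
      exact coeff_eq_zero_of_natDegree_lt (by omega)
  rw [hσ.map_mul s t (N := M + 2) (by omega), Finset.sum_range_succ', Finset.sum_range_succ',
    coeff_add, coeff_add, finsetSum_coeff, Finset.sum_eq_zero hvanish, zero_add, add_comm]
  simp

theorem coeff_map_mul_add {s t : S} {M n : ℕ} (hs : (σ s).natDegree ≤ M)
    (ht : (σ t).natDegree ≤ n) :
    (σ (s * t)).coeff (M + n) = (σ s).coeff M * (σ t).coeff n := by
  rw [hσ.coeff_map_mul_eq_coeff_add hs ht (Nat.le_succ _), coeff_add,
    coeff_mul_add_eq_of_natDegree_le hs ht, coeff_derivative_mul_eq_zero hs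
      ((natDegree_mapCoeffs_le _).trans ht) le_rfl, add_zero]

-- The products `σ s * σ t` and `σ t * σ s` agree, so the coefficients of `X ^ (M + n - 1)` in
-- `σ (s * t)` and `σ (t * s)` differ only by their first derivative terms.
theorem coeff_mul_deriv_eq_of_commute {s t : S} {M n : ℕ} (hst : Commute s t)
    (hs : (σ s).natDegree ≤ M) (ht : (σ t).natDegree ≤ n) :
    M * (σ s).coeff M * ((σ t).coeff n)′ = n * (σ t).coeff n * ((σ s).coeff M)′ := by
  obtain h0 | ⟨m, hm⟩ : M + n = 0 ∨ ∃ m, m + 1 = M + n := by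
    cases h : M + n <;> simp
  · obtain ⟨rfl, rfl⟩ : M = 0 ∧ n = 0 := by omega
    simp
  have hcomm := congrArg (fun u => (σ u).coeff m) hst.eq
  simp only [hσ.coeff_map_mul_eq_coeff_add hs ht hm.ge,
    hσ.coeff_map_mul_eq_coeff_add ht hs (by omega : n + M ≤ m + 1)] at hcomm
  rw [mul_comm (σ t), coeff_add, coeff_add, add_right_inj,
    coeff_derivative_mul hs ((natDegree_mapCoeffs_le _).trans ht) hm,
    coeff_derivative_mul ht ((natDegree_mapCoeffs_le _).trans hs) (by omega)] at hcomm
  exact hcomm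

theorem degree_map_lt_of_mul {T P : S} {M : ℕ} (hP : IsUnit (σ P).leadingCoeff)
    (h : (σ (T * P)).degree < (M + (σ P).natDegree : ℕ)) : (σ T).degree < M := by
  rcases eq_or_ne (σ T) 0 with hT | hT
  · simp [hT]
  rw [← natDegree_lt_iff_degree_lt hT]
  by_contra! hM
  have hcoeff := (degree_lt_iff_coeff_zero _ _).1 h _ (Nat.add_le_add_right hM _)
  rw [hσ.coeff_map_mul_add le_rfl le_rfl] at hcoeff
  exact hT (leadingCoeff_eq_zero.1 (hP.mul_left_eq_zero.1 hcoeff))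

theorem eq_zero_of_mul_eq_zero {T P : S} (hP : IsUnit (σ P).leadingCoeff) (h : T * P = 0) :
    T = 0 := by
  have hdeg : (σ T).degree < (0 : ℕ) := hσ.degree_map_lt_of_mul hP (by simp [h])
  simpa [Nat.WithBot.lt_zero_iff] using hdeg

theorem natDegree_map_pow_le (s : S) (i : ℕ) : (σ (s ^ i)).natDegree ≤ i * (σ s).natDegree := by
  induction i with
  | zero => simp [hσ.map_one]
  | succ i ih =>
    rw [pow_succ, Nat.succ_mul]
    exact (hσ.natDegree_map_mul_le _ _).trans (Nat.add_le_add_right ih _)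

theorem exists_degree_map_sub_mul_lt {P : S} (hP : IsUnit (σ P).leadingCoeff) (s : S) :
    ∃ T, (σ (s - T * P)).degree < (σ P).natDegree := by
  set n := (σ P).natDegree
  suffices h : ∀ N s, (σ s).degree < (n + N : ℕ) → ∃ T, (σ (s - T * P)).degree < n from
    h ((σ s).natDegree + 1) s
      (degree_le_natDegree.trans_lt (Nat.cast_lt.2 (by omega)))
  intro N
  induction N with
  | zero => exact fun s hs => ⟨0, by simpa using hs⟩
  | succ N ih =>
    intro s hs
    obtain ⟨u, hu⟩ := hP
    let q : S := σ.symm (monomial N ((σ s).coeff (n + N) * ↑u⁻¹))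
    have hq : (σ q).natDegree ≤ N := by
      simpa only [q, σ.apply_symm_apply] using natDegree_monomial_le _
    have hlt : (σ (s - q * P)).degree < (n + N : ℕ) := by
      rw [degree_lt_iff_coeff_zero] at hs ⊢
      intro i hi
      rw [map_sub, coeff_sub]
      rcases hi.eq_or_lt with rfl | hi
      · rw [add_comm n N, hσ.coeff_map_mul_add hq le_rfl, coeff_natDegree, ← hu, add_comm N n]
        simp [q]
      · rw [hs i hi, coeff_eq_zero_of_natDegree_lt, sub_zero]
        exact ((hσ.natDegree_map_mul_le q P).trans (Nat.add_le_add_right hq _)).trans_lt (by omega)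
    obtain ⟨T, hT⟩ := ih _ hlt
    exact ⟨q + T, by rwa [add_mul, ← sub_sub]⟩

theorem finite_quotient_span_singleton {P : S} (hP : IsUnit (σ P).leadingCoeff) :
    Module.Finite R (S ⧸ S ∙ P) := by
  have : Module.Finite R (degreeLT R (σ P).natDegree) := .equiv (degreeLTEquiv R _).symm
  let f : degreeLT R (σ P).natDegree →ₗ[R] S ⧸ S ∙ P :=
    ((S ∙ P).mkQ.restrictScalars R ∘ₗ σ.symm.toLinearMap).domRestrict _
  refine .of_surjective f fun v => ?_
  obtain ⟨s, rfl⟩ := (S ∙ P).mkQ_surjective v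
  obtain ⟨T, hT⟩ := hσ.exists_degree_map_sub_mul_lt hP s
  refine ⟨⟨σ (s - T * P), mem_degreeLT.2 hT⟩, ?_⟩
  have hmem : T * P ∈ S ∙ P := Submodule.mem_span_singleton.2 ⟨T, rfl⟩
  simp only [f, LinearMap.domRestrict_apply, LinearMap.comp_apply, LinearMap.restrictScalars_apply,
    LinearEquiv.coe_coe, σ.symm_apply_apply, map_sub, sub_eq_self]
  exact (Submodule.Quotient.mk_eq_zero _).2 hmem

end IsSymbolMap

end Symbol

section LinearODE

variable [CommRing R] [Differential R]

theorem deriv_pow_of_deriv_eq_mul {c y : R} (hy : y′ = c * y) (n : ℕ) :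
    (y ^ n)′ = n * c * y ^ n := by
  rw [Derivation.leibniz_pow, hy]
  cases n with
  | zero => simp
  | succ n => simp only [Nat.add_sub_cancel, smul_eq_mul, nsmul_eq_mul]; ring

theorem exists_smul_eq_of_deriv_eq_mul (K : Type*) [CommRing K] [Algebra K R]
    [Differential.ContainConstants K R] {c y z : R} (hz : IsUnit z) (hz' : z′ = c * z)
    (hy : y′ = c * y) : ∃ k : K, k • z = y := by
  obtain ⟨u, rfl⟩ := hz
  have hconst : (y * ↑u⁻¹)′ = 0 := by
    rw [Derivation.leibniz, Derivation.leibniz_of_mul_eq_one _ u.inv_mul, hy, hz']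
    simp only [smul_eq_mul]
    linear_combination (-(y * c * ↑u⁻¹)) * u.mul_inv
  obtain ⟨k, hk⟩ := mem_range_of_deriv_eq_zero K hconst
  exact ⟨k, by rw [Algebra.smul_def, hk, Units.inv_mul_cancel_right]⟩

variable (K : Type*) [Field K] [Algebra K R] [Differential.ContainConstants K R] [IsReduced R]

include K

theorem eq_zero_or_isUnit_of_deriv_eq_mul {a c y : R} {n M : ℕ} (hn : n ≠ 0) (ha : IsUnit a)
    (hac : (a ^ M)′ = n * c * a ^ M) (hy : y′ = c * y) : y = 0 ∨ IsUnit y := by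
  obtain ⟨k, hk⟩ := exists_smul_eq_of_deriv_eq_mul K (ha.pow M) hac (deriv_pow_of_deriv_eq_mul hy n)
  rcases eq_or_ne k 0 with rfl | hk0
  · rw [zero_smul] at hk
    exact .inl (eq_zero_of_pow_eq_zero hk.symm)
  · right
    rw [← isUnit_pow_iff hn, ← hk, Algebra.smul_def]
    exact (hk0.isUnit.map _).mul (ha.pow M)

theorem exists_forall_smul_eq_of_mul_deriv_eq {a : R} {n : ℕ} (hn : (n : R) ≠ 0)
    (ha : IsUnit a) (M : ℕ) :
    ∃ z : R, ∀ y, M * y * a′ = n * a * y′ → ∃ k : K, k • z = y := by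
  have hnK : (n : K) ≠ 0 := fun h => hn (by rw [← map_natCast (algebraMap K R), h, map_zero])
  obtain ⟨m, hm⟩ : IsUnit (n : R) := by
    simpa using hnK.isUnit.map (algebraMap K R)
  obtain ⟨u, rfl⟩ := ha
  let c : R := M * ↑m⁻¹ * (u : R)′ * ↑u⁻¹
  have hODE : ∀ y : R, M * y * (u : R)′ = n * u * y′ → y′ = c * y := fun y hy => by
    rw [← hm] at hy
    simp only [c]
    linear_combination (-(↑m⁻¹ * ↑u⁻¹)) * hy - (y′ * u * ↑u⁻¹) * m.inv_mul - y′ * u.mul_inv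
  have hu : (u : R)′ = (u : R)′ * ↑u⁻¹ * u := by rw [Units.inv_mul_cancel_right]
  have hc : ((u : R) ^ M)′ = n * c * ↑u ^ M := by
    rw [deriv_pow_of_deriv_eq_mul hu, ← hm]
    simp only [c]
    linear_combination (-(M * (u : R)′ * ↑u⁻¹ * ↑u ^ M)) * m.mul_inv
  by_cases hz : ∃ z : R, M * z * (u : R)′ = n * u * z′ ∧ z ≠ 0
  · obtain ⟨z, hz, hz0⟩ := hz
    have hunit := (eq_zero_or_isUnit_of_deriv_eq_mul K (by rintro rfl; simp at hn) u.isUnit hc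
      (hODE z hz)).resolve_left hz0
    exact ⟨z, fun y hy => exists_smul_eq_of_deriv_eq_mul K hunit (hODE z hz) (hODE y hy)⟩
  · push Not at hz
    exact ⟨0, fun y hy => ⟨0, by rw [smul_zero, hz y hy]⟩⟩

theorem isField_of_natCast_eq_zero [Nontrivial R] {n : ℕ} (hn : n ≠ 0) (hnR : (n : R) = 0) :
    IsField R where
  exists_pair_ne := ⟨0, 1, zero_ne_one⟩
  mul_comm := mul_comm
  mul_inv_cancel {r} hr := by
    have hconst : (r ^ n)′ = 0 := by
      rw [Derivation.leibniz_pow, ← Nat.cast_smul_eq_nsmul R, hnR, zero_smul]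
    obtain ⟨k, hk⟩ := mem_range_of_deriv_eq_zero K hconst
    have hk0 : k ≠ 0 := by
      rintro rfl
      exact hr (eq_zero_of_pow_eq_zero (hk.symm.trans (map_zero _)))
    exact ((isUnit_pow_iff hn).1 (hk ▸ hk0.isUnit.map (algebraMap K R))).exists_right_inv

end LinearODE

section Connection

variable [Field R] [Differential R] {V : Type*} [AddCommGroup V] [Module R V]

variable (R) in
/-- An additive map `D` on an `R`-module is a connection if it satisfies the Leibniz rule over the
derivation of `R`. Vectors killed by `D` are the horizontal ones. -/
def IsConnection (D : V →+ V) : Prop := ∀ (r : R) (v : V), D (r • v) = r • D v + r′ • v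

namespace IsConnection

variable {D : V →+ V} (hD : IsConnection R D)

/-- The connection `φ ↦ D ∘ φ - φ ∘ D` on endomorphisms induced by `D`. Its horizontal vectors are
the endomorphisms commuting with `D`. -/
def endomorphism (hD : IsConnection R D) : Module.End R V →+ Module.End R V where
  toFun φ :=
    { toFun := fun v => D (φ v) - φ (D v)
      map_add' := fun v w => by simp only [map_add]; abel
      map_smul' := fun r v => by
        simp only [map_smul, hD r, map_add, RingHom.id_apply, smul_sub]; abel }
  map_zero' := by ext; simp
  map_add' φ ψ := by
    ext
    simp only [LinearMap.add_apply, map_add, LinearMap.coe_mk, AddHom.coe_mk]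
    abel

theorem isConnection_endomorphism : IsConnection R hD.endomorphism := fun r φ => by
  ext v
  change D (r • φ v) - r • φ (D v) = r • (D (φ v) - φ (D v)) + r′ • φ v
  rw [hD, smul_sub]
  abel

variable {K : Type*} [Field K] [Algebra K R] [Differential.ContainConstants K R] [Module K V]
  [IsScalarTower K R V]

include hD

theorem linearIndependent {ι : Type*} {v : ι → V} (hv : ∀ i, D (v i) = 0)
    (hK : LinearIndependent K v) : LinearIndependent R v := by
  classical
  rw [linearIndependent_iff_finset_linearIndependent]
  intro s
  induction s using Finset.induction_on with
  | empty => exact linearIndependent_empty_type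
  | insert a s ha ih =>
    change LinearIndepOn R v ↑s at ih
    change LinearIndepOn R v ↑(insert a s)
    rw [Finset.coe_insert, linearIndepOn_insert (by simpa using ha)]
    refine ⟨ih, fun hspan => ?_⟩
    obtain ⟨r, hr⟩ := Submodule.mem_span_image_finset_iff_exists_fun' R |>.1 hspan
    have hr' : ∀ i ∈ s, (r i)′ = 0 := by
      refine linearIndepOn_finset_iff.1 ih (fun i => (r i)′) ?_
      simpa [hD _ _, hv] using congrArg D hr
    refine hK.notMem_span_image (s := ↑s) (x := a) (by simpa using ha) ?_
    rw [← hr]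
    refine Submodule.sum_mem _ fun i hi => ?_
    obtain ⟨k, hk⟩ := mem_range_of_deriv_eq_zero K (hr' i hi)
    rw [← hk, algebraMap_smul]
    exact Submodule.smul_mem _ _ (Submodule.subset_span (Set.mem_image_of_mem v hi))

theorem rank_le_finrank [Module.Finite R V] (W : Submodule K V) (hW : ∀ v ∈ W, D v = 0) :
    Module.rank K W ≤ Module.finrank R V := by
  refine rank_le fun s hs => ?_
  have := hD.linearIndependent (v := fun w : s => (w : V)) (fun i => hW _ i.1.2)
    (hs.map' W.subtype (Submodule.ker_subtype W))
  simpa using this.fintype_card_le_finrank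

theorem rank_le_finrank_sq [Module.Finite R V] (W : Submodule K (Module.End R V))
    (hW : ∀ φ ∈ W, ∀ v, D (φ v) = φ (D v)) : Module.rank K W ≤ (Module.finrank R V ^ 2 : ℕ) := by
  rw [sq, ← Module.finrank_linearMap R R V V]
  exact hD.isConnection_endomorphism.rank_le_finrank W fun φ hφ =>
    LinearMap.ext fun v => sub_eq_zero.2 (hW φ hφ v)

end IsConnection

end Connection

section Rank

variable {K : Type*} [DivisionRing K]

theorem rank_le_rank_add_of_ker_le {V E : Type*} [AddCommGroup V] [Module K V]
    [AddCommGroup E] [Module K E] {W W' : Submodule K V} {c : ℕ}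
    (φ : W →ₗ[K] E) (hker : ∀ w : W, φ w = 0 → (w : V) ∈ W')
    (hrange : Module.rank K (LinearMap.range φ) ≤ c) :
    Module.rank K W ≤ Module.rank K W' + c := by
  have hquot : Module.rank K (W ⧸ LinearMap.ker φ) ≤ c := by
    rw [← Cardinal.lift_le_nat_iff, φ.quotKerEquivRange.lift_rank_eq]
    exact Cardinal.lift_le_nat_iff.2 hrange
  have hle : (LinearMap.ker φ).map W.subtype ≤ W' := by
    rintro _ ⟨w, hw, rfl⟩
    exact hker w hw
  rw [← Submodule.rank_quotient_add_rank (LinearMap.ker φ), add_comm]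
  exact add_le_add ((Submodule.equivMapOfInjective _ W.subtype_injective _).rank_eq.trans_le
    (Submodule.rank_mono hle)) hquot

theorem not_linearIndependent_of_rank_le {V : Type*} [AddCommGroup V] [Module K V]
    {W : ℕ → Submodule K V} {v : ℕ × ℕ → V} {c e : ℕ}
    (hrank : ∀ M, Module.rank K (W M) ≤ (c * M : ℕ))
    (hmem : ∀ i j N, i < N → j < N → v (i, j) ∈ W (e * N)) : ¬ LinearIndependent K v := by
  intro hv
  let N := c * e + 1
  let w : Fin N × Fin N → W (e * N) := fun p => ⟨v (p.1, p.2), hmem _ _ _ p.1.2 p.2.2⟩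
  have hw : LinearIndependent K w := by
    refine LinearIndependent.of_comp (W (e * N)).subtype ?_
    exact hv.comp (Prod.map Fin.val Fin.val) (Fin.val_injective.prodMap Fin.val_injective)
  have hcard := hw.cardinal_lift_le_rank.trans (Cardinal.lift_le_nat_iff.2 (hrank _))
  simp only [Cardinal.mk_fintype, Fintype.card_prod, Fintype.card_fin, Cardinal.lift_natCast,
    Nat.cast_le] at hcard
  rw [← mul_assoc] at hcard
  exact Nat.not_succ_le_self _ (Nat.le_of_mul_le_mul_right hcard (Nat.succ_pos _))

end Rank

section Centralizer

variable {K : Type*} [Field K] [CommRing R] [Algebra K R] [Ring S] [Algebra K S] [Module R S]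
  [IsScalarTower K R S]

/-- The `K`-subspace of those elements commuting with `P` whose symbol has degree less than `M`. -/
def centralizerDegreeLT (K : Type*) [Field K] [Algebra K R] [Algebra K S] [IsScalarTower K R S]
    (σ : S ≃ₗ[R] R[X]) (P : S) (M : ℕ) : Submodule K S :=
  ((degreeLT R M).comap σ.toLinearMap).restrictScalars K ⊓
    Subalgebra.toSubmodule (Subalgebra.centralizer K {P})

variable {σ : S ≃ₗ[R] R[X]} {P : S}

theorem mem_centralizerDegreeLT {s : S} {M : ℕ} :
    s ∈ centralizerDegreeLT K σ P M ↔ (σ s).degree < M ∧ Commute P s := by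
  simp [centralizerDegreeLT, mem_degreeLT, Subalgebra.mem_centralizer_iff, Commute, SemiconjBy]

theorem centralizerDegreeLT_zero : centralizerDegreeLT K σ P 0 = ⊥ := by
  refine le_bot_iff.1 fun s hs => ?_
  have h := (mem_centralizerDegreeLT.1 hs).1
  simpa [Nat.WithBot.lt_zero_iff] using h

theorem rank_centralizerDegreeLT_mul_le {n c : ℕ}
    (hstep : ∀ M, Module.rank K (centralizerDegreeLT K σ P (M + n)) ≤
      Module.rank K (centralizerDegreeLT K σ P M) + c) (M : ℕ) :
    Module.rank K (centralizerDegreeLT K σ P (n * M)) ≤ (c * M : ℕ) := by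
  induction M with
  | zero => simp [centralizerDegreeLT_zero]
  | succ M ih =>
    calc _ ≤ Module.rank K (centralizerDegreeLT K σ P (n * M)) + c := hstep _
      _ ≤ (c * M : ℕ) + c := by gcongr
      _ = _ := by rw [Nat.mul_succ, Nat.cast_add]

/-- Right multiplication by the elements commuting with `P`, acting on `S ⧸ S P`. -/
def mulRightQuotient (K R : Type*) [Field K] [CommRing R] [Algebra K R] [Algebra K S] [Module R S]
    [IsScalarTower K R S] [IsScalarTower R S S] (P : S) :
    Subalgebra.centralizer K {P} →ₗ[K] Module.End R (S ⧸ S ∙ P) where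
  toFun w := ((S ∙ P).mapQ (S ∙ P) (LinearMap.toSpanSingleton S S w) <| by
    rw [Submodule.span_singleton_le_iff_mem, Submodule.mem_comap, LinearMap.toSpanSingleton_apply,
      smul_eq_mul, Subalgebra.mem_centralizer_iff K |>.1 w.2 P rfl]
    exact Submodule.mem_span_singleton.2 ⟨w, rfl⟩).restrictScalars R
  map_add' v w := by
    refine LinearMap.ext fun s => ?_
    induction s using Submodule.Quotient.induction_on with
    | _ s => exact congrArg (S ∙ P).mkQ (mul_add s v w)
  map_smul' k w := by
    refine LinearMap.ext fun s => ?_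
    induction s using Submodule.Quotient.induction_on with
    | _ s => exact congrArg (S ∙ P).mkQ (mul_smul_comm k s (w : S))

end Centralizer

namespace IsSymbolMap

section Reduced

variable {K : Type*} [Field K] [CommRing R] [Differential R] [Algebra K R] [Ring S] [Algebra K S]
  [Module R S] [IsScalarTower K R S] [IsScalarTower R S S] {σ : S ≃ₗ[R] R[X]} {P Q x : S}
  (hσ : IsSymbolMap x σ)

include hσ

theorem pow_mul_pow_mem_centralizerDegreeLT (hPQ : Commute P Q) {i j N : ℕ}
    (hN : i * (σ P).natDegree + j * (σ Q).natDegree < N) :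
    P ^ i * Q ^ j ∈ centralizerDegreeLT K σ P N := by
  refine mem_centralizerDegreeLT.2 ⟨degree_le_natDegree.trans_lt (Nat.cast_lt.2 (lt_of_le_of_lt
    ((hσ.natDegree_map_mul_le _ _).trans (add_le_add ?_ ?_)) hN)), ?_⟩
  · exact hσ.natDegree_map_pow_le P i
  · exact hσ.natDegree_map_pow_le Q j
  · exact ((Commute.refl P).pow_right i).mul_right (hPQ.pow_right j)

theorem mem_centralizerDegreeLT_of_mul_mem (hP : IsUnit (σ P).leadingCoeff) {T : S} {M : ℕ}
    (h : T * P ∈ centralizerDegreeLT K σ P (M + (σ P).natDegree)) :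
    T ∈ centralizerDegreeLT K σ P M := by
  obtain ⟨hdeg, hcomm⟩ := mem_centralizerDegreeLT.1 h
  refine mem_centralizerDegreeLT.2 ⟨hσ.degree_map_lt_of_mul hP hdeg, ?_⟩
  refine sub_eq_zero.1 (hσ.eq_zero_of_mul_eq_zero hP ?_)
  rw [sub_mul, mul_assoc, hcomm.eq, sub_self]

variable [IsReduced R] [Differential.ContainConstants K R]

theorem rank_centralizerDegreeLT_succ_le (hP : IsUnit (σ P).leadingCoeff)
    (hn : ((σ P).natDegree : R) ≠ 0) (M : ℕ) :
    Module.rank K (centralizerDegreeLT K σ P (M + 1)) ≤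
      Module.rank K (centralizerDegreeLT K σ P M) + 1 := by
  obtain ⟨z, hz⟩ := exists_forall_smul_eq_of_mul_deriv_eq K hn hP M
  let φ : centralizerDegreeLT K σ P (M + 1) →ₗ[K] R :=
    ((lcoeff R M ∘ₗ σ.toLinearMap).restrictScalars K).domRestrict _
  have hrange : LinearMap.range φ ≤ K ∙ z := by
    rintro _ ⟨⟨s, hs⟩, rfl⟩
    rw [mem_centralizerDegreeLT] at hs
    have hdeg : (σ s).natDegree ≤ M :=
      natDegree_le_of_degree_le (Order.lt_succ_iff.1 hs.1)
    exact Submodule.mem_span_singleton.2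
      (hz _ (hσ.coeff_mul_deriv_eq_of_commute hs.2.symm hdeg le_rfl))
  have hrank : Module.rank K (LinearMap.range φ) ≤ (1 : ℕ) := by
    simpa using (Submodule.rank_mono hrange).trans (rank_span_le _)
  rw [← Nat.cast_one (R := Cardinal)]
  refine rank_le_rank_add_of_ker_le φ (fun ⟨s, hs⟩ hφ => ?_) hrank
  rw [mem_centralizerDegreeLT] at hs ⊢
  refine ⟨?_, hs.2⟩
  rw [degree_lt_iff_coeff_zero] at hs ⊢
  rintro i hi
  rcases hi.eq_or_lt with rfl | hi
  · exact hφ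
  · exact hs.1 i hi

theorem rank_centralizerDegreeLT_add_le_of_natCast_ne_zero
    (hP : IsUnit (σ P).leadingCoeff) (hn : ((σ P).natDegree : R) ≠ 0) (M k : ℕ) :
    Module.rank K (centralizerDegreeLT K σ P (M + k)) ≤
      Module.rank K (centralizerDegreeLT K σ P M) + k := by
  induction k with
  | zero => simp
  | succ k ih =>
    rw [Nat.cast_succ]
    exact ((hσ.rank_centralizerDegreeLT_succ_le hP hn _).trans (add_le_add_left ih 1)).trans_eq
      (add_assoc _ _ _)

end Reduced

section Field

variable {K : Type*} [Field K] [Field R] [Differential R] [Algebra K R] [Ring S] [Algebra K S]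
  [Module R S] [IsScalarTower K R S] [IsScalarTower R S S] {σ : S ≃ₗ[R] R[X]} {P x : S}
  (hσ : IsSymbolMap x σ)

include hσ

theorem isConnection_smul_quotient :
    IsConnection (R := R) (DistribSMul.toAddMonoidHom (S ⧸ S ∙ P) x) := fun r v => by
  induction v using Submodule.Quotient.induction_on with
  | _ s => exact congrArg (S ∙ P).mkQ (hσ.x_mul_smul r s)

theorem rank_range_mulRightQuotient_le [Differential.ContainConstants K R]
    (hP : IsUnit (σ P).leadingCoeff) :
    Module.rank K (LinearMap.range (mulRightQuotient K R P)) ≤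
      (Module.finrank R (S ⧸ S ∙ P) ^ 2 : ℕ) := by
  have := hσ.finite_quotient_span_singleton hP
  refine hσ.isConnection_smul_quotient.rank_le_finrank_sq _ ?_
  rintro _ ⟨w, rfl⟩ v
  induction v using Submodule.Quotient.induction_on with
  | _ s => exact congrArg (S ∙ P).mkQ (mul_assoc x s w).symm

theorem rank_centralizerDegreeLT_add_le_finrank_sq [Differential.ContainConstants K R]
    (hP : IsUnit (σ P).leadingCoeff) (M : ℕ) :
    Module.rank K (centralizerDegreeLT K σ P (M + (σ P).natDegree)) ≤
      Module.rank K (centralizerDegreeLT K σ P M) + (Module.finrank R (S ⧸ S ∙ P) ^ 2 : ℕ) := by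
  let φ := mulRightQuotient K R P ∘ₗ Submodule.inclusion
    (inf_le_right : centralizerDegreeLT K σ P (M + (σ P).natDegree) ≤ _)
  have hrange : Module.rank K (LinearMap.range φ) ≤ (Module.finrank R (S ⧸ S ∙ P) ^ 2 : ℕ) :=
    (Submodule.rank_mono (LinearMap.range_comp_le_range _ _)).trans
      (hσ.rank_range_mulRightQuotient_le hP)
  have hker : ∀ w, φ w = 0 →
      (w : S) ∈ (centralizerDegreeLT K σ P M).map (LinearMap.mulRight K P) := fun w hw => by
    have hmk : (S ∙ P).mkQ (1 * w) = 0 := DFunLike.congr_fun hw ((S ∙ P).mkQ 1)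
    rw [one_mul, Submodule.mkQ_apply, Submodule.Quotient.mk_eq_zero] at hmk
    obtain ⟨T, hT⟩ := Submodule.mem_span_singleton.1 hmk
    rw [smul_eq_mul] at hT
    exact ⟨T, hσ.mem_centralizerDegreeLT_of_mul_mem hP (hT ▸ w.2), hT⟩
  exact (rank_le_rank_add_of_ker_le φ hker hrange).trans (add_le_add_left (rank_map_le _ _) _)

end Field

section Reduced

variable {K : Type*} [Field K] [CommRing R] [Differential R] [Algebra K R] [Ring S] [Algebra K S]
  [Module R S] [IsScalarTower K R S] [IsScalarTower R S S] [IsReduced R]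
  [Differential.ContainConstants K R] {σ : S ≃ₗ[R] R[X]} {P Q x : S} (hσ : IsSymbolMap x σ)

include hσ

theorem exists_rank_centralizerDegreeLT_mul_le (hn : (σ P).natDegree ≠ 0)
    (hP : IsUnit (σ P).leadingCoeff) :
    ∃ c : ℕ, ∀ M,
      Module.rank K (centralizerDegreeLT K σ P ((σ P).natDegree * M)) ≤ (c * M : ℕ) := by
  by_cases hnR : ((σ P).natDegree : R) = 0
  · have : Nontrivial R := not_subsingleton_iff_nontrivial.1 fun _ =>
      hn natDegree_of_subsingleton
    let := (isField_of_natCast_eq_zero K hn hnR).toField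
    exact ⟨_, rank_centralizerDegreeLT_mul_le
      (hσ.rank_centralizerDegreeLT_add_le_finrank_sq hP)⟩
  · exact ⟨_, rank_centralizerDegreeLT_mul_le fun M =>
      hσ.rank_centralizerDegreeLT_add_le_of_natCast_ne_zero hP hnR M _⟩

theorem not_linearIndependent_pow_mul_pow (hPQ : Commute P Q)
    (hn : (σ P).natDegree ≠ 0) (hP : IsUnit (σ P).leadingCoeff) :
    ¬ LinearIndependent K fun p : ℕ × ℕ => P ^ p.1 * Q ^ p.2 := by
  obtain ⟨c, hc⟩ := hσ.exists_rank_centralizerDegreeLT_mul_le (K := K) hn hP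
  refine not_linearIndependent_of_rank_le (e := (σ P).natDegree + (σ Q).natDegree) hc
    fun i j N hi hj => ?_
  refine hσ.pow_mul_pow_mem_centralizerDegreeLT hPQ ?_
  have hpos := Nat.pos_of_ne_zero hn
  calc i * (σ P).natDegree + j * (σ Q).natDegree
      < N * (σ P).natDegree + N * (σ Q).natDegree :=
        add_lt_add_of_lt_of_le (by gcongr) (by gcongr)
    _ = 1 * (((σ P).natDegree + (σ Q).natDegree) * N) := by ring
    _ ≤ (σ P).natDegree * (((σ P).natDegree + (σ Q).natDegree) * N) := by gcongr; exact hpos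

end Reduced

end IsSymbolMap

section Constants

variable [CommRing R] [Differential R]

/-- The subring of constants of a differential ring. -/
def differentialConstants (R : Type*) [CommRing R] [Differential R] : Subring R where
  carrier := {a | a′ = 0}
  zero_mem' := map_zero _
  one_mem' := Derivation.map_one_eq_zero _
  add_mem' {a b} ha hb := by simp_all
  neg_mem' {a} ha := by simp_all
  mul_mem' {a b} ha hb := by simp_all

instance : Differential.ContainConstants (differentialConstants R) R where
  mem_range_of_deriv_eq_zero {r} hr := ⟨⟨r, hr⟩, rfl⟩

theorem isField_differentialConstants (h : IsFieldSubset {a : R | a′ = 0}) :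
    IsField (differentialConstants R) where
  exists_pair_ne := ⟨0, 1, fun h01 => h.1 (congrArg Subtype.val h01)⟩
  mul_comm := mul_comm
  mul_inv_cancel {a} ha := by
    obtain ⟨b, hb, hab⟩ := h.2 a a.2 (by simpa using ha)
    exact ⟨⟨b, hb⟩, Subtype.ext hab⟩

theorem IsSymbolMap.exists_relation_pow_mul_pow [Ring S] [Module R S] [IsScalarTower R S S]
    [IsReduced R] {x : S} {σ : S ≃ₗ[R] R[X]} (hσ : IsSymbolMap x σ)
    (hF : IsField (differentialConstants R)) {P Q : S} (hPQ : Commute P Q)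
    (hn : (σ P).natDegree ≠ 0) (hP : IsUnit (σ P).leadingCoeff) :
    ∃ c : ℕ × ℕ →₀ differentialConstants R, c ≠ 0 ∧
      (c.sum fun p b => (b : R) • (P ^ p.1 * Q ^ p.2)) = 0 := by
  let := hF.toField
  let : Algebra (differentialConstants R) S :=
    Algebra.ofModule (fun k s t => smul_mul_assoc (k : R) s t)
      fun k s t => hσ.mul_smul_of_deriv_eq_zero k.2 s t
  have hdep := hσ.not_linearIndependent_pow_mul_pow (K := differentialConstants R) hPQ hn hP
  rw [linearIndependent_iff] at hdep
  push Not at hdep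
  obtain ⟨c, hsum, hc⟩ := hdep
  exact ⟨c, hc, hsum⟩

end Constants

section OreExtension

variable [CommRing R] [Ring S] {ι : R →+* S} {δ : R → R} {x : S}

/-- The map `δ` of a differential operator ring `R[x; id, δ]` as a bundled derivation. -/
def IsOreExtension.derivation_s8 (h : IsOreExtension ι (RingHom.id R) δ x) : Derivation ℤ R R :=
  Derivation.mk' (AddMonoidHom.mk' δ h.deriv_add).toIntLinearMap fun a b => by
    simp [h.deriv_mul, mul_comm b]

variable [Module R S] (h : IsOreExtension ι (RingHom.id R) δ x)
  (hsmul : ∀ (r : R) (s : S), r • s = ι r * s)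

/-- The basis `1, x, x², …` of a differential operator ring. The hypothesis `hsmul` says that `R`
acts through `ι`. -/
def IsOreExtension.basis (h : IsOreExtension ι (RingHom.id R) δ x)
    (hsmul : ∀ (r : R) (s : S), r • s = ι r * s) : Module.Basis ℕ R S :=
  .ofRepr (LinearEquiv.ofBijective (Finsupp.linearCombination R (x ^ ·)) <| by
    refine (Function.bijective_iff_existsUnique _).2 fun s => ?_
    simpa only [Finsupp.linearCombination_apply, hsmul, eq_comm] using h.repr_uniq s).symm

theorem IsOreExtension.basis_apply (i : ℕ) : h.basis hsmul i = x ^ i := by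
  rw [← (h.basis hsmul).repr_symm_single_one]
  simp [basis]

theorem IsOreExtension.basis_repr (s : S) : (h.basis hsmul).repr s = oreCoeff h s := by
  refine (h.repr_uniq s).unique ?_ (h.repr_uniq s).exists.choose_spec
  simpa only [Finsupp.linearCombination_apply, h.basis_apply, hsmul] using
    ((h.basis hsmul).linearCombination_repr s).symm

/-- The symbol map `∑ rᵢ xⁱ ↦ ∑ rᵢ Xⁱ` of a differential operator ring. -/
def IsOreExtension.symbol (h : IsOreExtension ι (RingHom.id R) δ x)
    (hsmul : ∀ (r : R) (s : S), r • s = ι r * s) : S ≃ₗ[R] R[X] :=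
  (h.basis hsmul).equiv (basisMonomials R) (Equiv.refl ℕ)

theorem IsOreExtension.symbol_x_pow (i : ℕ) : h.symbol hsmul (x ^ i) = X ^ i := by
  rw [← h.basis_apply hsmul, symbol, Module.Basis.equiv_apply, coe_basisMonomials, Equiv.refl_apply]
  exact monomial_one_right_eq_X_pow i

theorem IsOreExtension.coeff_symbol (s : S) (i : ℕ) :
    (h.symbol hsmul s).coeff i = oreCoeff h s i := by
  have heq : lcoeff R i ∘ₗ (h.symbol hsmul).toLinearMap =
      Finsupp.lapply i ∘ₗ (h.basis hsmul).repr.toLinearMap :=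
    (h.basis hsmul).ext fun j => by
      simp only [LinearMap.comp_apply, LinearEquiv.coe_coe, lcoeff_apply, Finsupp.lapply_apply,
        Module.Basis.repr_self, Finsupp.single_apply]
      rw [h.basis_apply, h.symbol_x_pow, coeff_X_pow]
      simp only [eq_comm]
  rw [← h.basis_repr hsmul]
  exact LinearMap.congr_fun heq s

theorem IsOreExtension.natDegree_symbol (s : S) : (h.symbol hsmul s).natDegree = oreDeg h s := by
  refine le_antisymm (natDegree_le_iff_coeff_eq_zero.2 fun i hi => ?_)
    (Finset.sup_le fun i hi => ?_)
  · rw [h.coeff_symbol hsmul]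
    by_contra hne
    exact hi.not_ge (Finset.le_sup (f := id) (Finsupp.mem_support_iff.2 hne))
  · exact le_natDegree_of_ne_zero (by rwa [h.coeff_symbol hsmul, ← Finsupp.mem_support_iff])

theorem IsOreExtension.isSymbolMap_symbol [Differential R] (hδ : ∀ r : R, r′ = δ r) :
    IsSymbolMap x (h.symbol hsmul) where
  map_one := by simpa using h.symbol_x_pow hsmul 0
  map_x_mul s := by
    obtain ⟨p, rfl⟩ := (h.symbol hsmul).symm.surjective s
    rw [LinearEquiv.apply_symm_apply]
    induction p using Polynomial.induction_on' with
    | add p q hp hq => simp only [map_add, mul_add, hp, hq]; abel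
    | monomial i r =>
      have hsymm : (h.symbol hsmul).symm (monomial i r) = r • x ^ i := by
        rw [LinearEquiv.symm_apply_eq, map_smul, h.symbol_x_pow, smul_X_eq_monomial]
      have hx : x * r • x ^ i = r • x ^ (i + 1) + r′ • x ^ i := by
        rw [hsmul, hsmul, hsmul, hδ, ← mul_assoc, h.comm_rule, add_mul, mul_assoc, ← pow_succ']
        rfl
      simp only [hsymm, hx, map_add, map_smul, h.symbol_x_pow, smul_X_eq_monomial,
        X_mul_monomial, Differential.mapCoeffs_monomial]

end OreExtension

/-- **Goodearl, Theorem 1.13.** Let `R` be a semiprime commutative ring with a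
derivation `δ` whose ring of constants is a field `F`. If `P` and `Q` are commuting
elements of `R[x; id, δ]`, where `P` has positive degree and invertible leading
coefficient, then there is a nonzero polynomial `f(s,t)` with coefficients in `F` such
that `f(P,Q) = 0`. -/
theorem goodearl_annihilating_polynomial [CommRing R] [Ring S]
    (hsemiprime : ∀ a : R, IsNilpotent a → a = 0)
    (ι : R →+* S) (δ : R → R) (x : S) (h : IsOreExtension ι (RingHom.id R) δ x)
    (hF : IsFieldSubset {a : R | δ a = 0})
    (P Q : S) (hPQ : P * Q = Q * P)
    (hdeg : 0 < oreDeg h P) (hlc : IsUnit (oreLeadCoeff h P)) :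
    ∃ c : ℕ × ℕ →₀ R, c ≠ 0 ∧ (∀ p, c p ∈ {a : R | δ a = 0}) ∧
      (c.sum fun p b => ι b * P ^ p.1 * Q ^ p.2) = 0 := by
  have : IsReduced R := ⟨hsemiprime⟩
  let : Differential R := ⟨h.derivation_s8⟩
  let : Module R S := Module.compHom S ι
  have : IsScalarTower R S S := ⟨fun r s t => mul_assoc (ι r) s t⟩
  have hsmul : ∀ (r : R) (s : S), r • s = ι r * s := fun _ _ => rfl
  have hσ : IsSymbolMap x (h.symbol hsmul) := h.isSymbolMap_symbol hsmul fun _ => rfl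
  obtain ⟨c, hc, hsum⟩ := hσ.exists_relation_pow_mul_pow (isField_differentialConstants hF) hPQ
    (by rw [h.natDegree_symbol]; exact hdeg.ne')
    (by rwa [leadingCoeff, h.coeff_symbol, h.natDegree_symbol])
  refine ⟨c.mapRange Subtype.val rfl, ?_, fun p => (c p).2, ?_⟩
  · rwa [Ne, Finsupp.mapRange_eq_zero Subtype.val_injective]
  · rw [Finsupp.sum_mapRange_index (by simp)]
    simpa only [hsmul, mul_assoc] using hsum
end
end
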